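/- arXiv:2012.08766 — 7 statements merged into one kernel-verified Lean document; each statement's English description precedes it below -/
import Mathlib

section
/- Let 1<p<∞, μ>0 and η>0. Then for every u ∈ C_c^1((0,η]) one has ∫_0^η |u'(t)|^p e^{-(p-1)/t} dt + Λ_p^{1/p'} μ^{1-p} |u(η)|^p ≥ Λ_p ∫_0^η |u(t)|^p e^{-(p-1)/t} / ( e^{-1/t} ( ∫_t^η e^{1/s} ds + μ ) )^p dt. -/
open MeasureTheory Set

theorem mul_mul_rpow_sub_one_le {p x y : ℝ} (hp : 1 < p) (hx : 0 ≤ x) (hy : 0 ≤ y) :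
    p * (x * y ^ (p - 1)) ≤ x ^ p + (p - 1) * y ^ p := by
  have hp0 : 0 < p := by linarith
  have hp1 : p - 1 ≠ 0 := by linarith
  have h := Real.young_inequality_of_nonneg hx (Real.rpow_nonneg hy (p - 1))
    (Real.HolderConjugate.conjExponent hp)
  rw [Real.conjExponent, ← Real.rpow_mul hy, mul_div_cancel₀ _ hp1] at h
  calc p * (x * y ^ (p - 1)) ≤ p * (x ^ p / p + y ^ p / (p / (p - 1))) := by gcongr
    _ = x ^ p + (p - 1) * y ^ p := by field_simp

/-- The derivative of `|·| ^ p` has absolute value `p * |·| ^ (p - 1)`. -/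
theorem abs_deriv_abs_rpow {p : ℝ} (hp : 1 < p) (x : ℝ) :
    |deriv (fun x : ℝ => |x| ^ p) x| = p * |x| ^ (p - 1) := by
  rw [(hasDerivAt_abs_rpow x hp).deriv, abs_mul, abs_mul, abs_of_pos (by linarith : 0 < p),
    abs_of_nonneg (by positivity)]
  rcases eq_or_ne x 0 with rfl | hx
  · simp [Real.zero_rpow (by linarith : p - 1 ≠ 0)]
  · have : |x| ≠ 0 := abs_ne_zero.mpr hx
    rw [mul_assoc, ← Real.rpow_add_one this]
    ring_nf

theorem continuous_deriv_abs_rpow {p : ℝ} (hp : 1 < p) :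
    Continuous (deriv (fun x : ℝ => |x| ^ p)) := by
  have h : ContDiff ℝ 1 (fun x : ℝ => ‖x‖ ^ p) := contDiff_norm_rpow hp
  exact h.continuous_deriv le_rfl

/-- Pointwise inequality behind the weighted Hardy inequality, with weight `w`, primitive `F` of
`-w`, and `d` in the role of the derivative of `|·| ^ p` at `v`. -/
theorem hardy_pointwise {p w F v v' d : ℝ} (hp : 1 < p) (hw : 0 < w) (hF : 0 < F)
    (hd : |d| = p * |v| ^ (p - 1)) :
    (1 - 1 / p) ^ p * (|v| ^ p * w ^ (1 - p) / (w⁻¹ * F) ^ p) ≤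
      |v'| ^ p * w ^ (1 - p) + (1 - 1 / p) ^ (p - 1) *
        (d * v' * F ^ (1 - p) + |v| ^ p * (-w * (1 - p) * F ^ (1 - p - 1))) := by
  have hp0 : 0 < p := by linarith
  have hc : 0 < 1 - 1 / p := by
    rw [sub_pos, div_lt_one hp0]; exact hp
  set c := 1 - 1 / p with hcdef
  have hpc : p - 1 = p * c := by rw [hcdef]; field_simp
  have hy := mul_mul_rpow_sub_one_le (x := |v'| / w) (y := c * |v| / F) hp
    (by positivity) (by positivity)
  have hcp : c ^ p = c ^ (p - 1) * c := by
    rw [← Real.rpow_add_one hc.ne']; ring_nf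
  have hwp : w ^ (1 - p) = w / w ^ p := by rw [Real.rpow_sub hw, Real.rpow_one]
  have hF1 : F ^ (1 - p) = (F ^ (p - 1))⁻¹ := by rw [← Real.rpow_neg hF.le]; ring_nf
  have hF2 : F ^ (1 - p - 1) = (F ^ p)⁻¹ := by rw [← Real.rpow_neg hF.le]; ring_nf
  have hdv : -(p * |v| ^ (p - 1) * |v'|) ≤ d * v' := by
    rw [← hd, ← abs_mul]; exact neg_abs_le _
  rw [Real.div_rpow (by positivity) hF.le, Real.div_rpow (by positivity) hF.le,
    Real.div_rpow (by positivity) hw.le, Real.mul_rpow hc.le (by positivity),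
    Real.mul_rpow hc.le (by positivity)] at hy
  have hy' := mul_le_mul_of_nonneg_left hy hw.le
  have hdv' := mul_le_mul_of_nonneg_left hdv
    (by positivity : 0 ≤ c ^ (p - 1) * (F ^ (p - 1))⁻¹)
  rw [Real.mul_rpow (by positivity) hF.le, Real.inv_rpow hw.le, hwp, hF1, hF2]
  have e1 : c ^ p * (|v| ^ p * (w / w ^ p) / ((w ^ p)⁻¹ * F ^ p))
      = w * (c ^ p * |v| ^ p / F ^ p) := by field_simp
  have e2 : w * (p * (|v'| / w * (c ^ (p - 1) * |v| ^ (p - 1) / F ^ (p - 1))))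
      = c ^ (p - 1) * (F ^ (p - 1))⁻¹ * (p * |v| ^ (p - 1) * |v'|) := by field_simp
  have e3 : c ^ (p - 1) * (|v| ^ p * (-w * (1 - p) * (F ^ p)⁻¹))
      = p * (w * (c ^ p * |v| ^ p / F ^ p)) := by
    rw [hcp, show 1 - p = -(p * c) by linarith]; ring
  rw [e2] at hy'
  rw [e1, mul_add, e3]
  have e4 : w * (|v'| ^ p / w ^ p + (p - 1) * (c ^ p * |v| ^ p / F ^ p))
      = |v'| ^ p * (w / w ^ p) + (p - 1) * (w * (c ^ p * |v| ^ p / F ^ p)) := by ring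
  rw [e4] at hy'
  have e5 : c ^ (p - 1) * (d * v' * (F ^ (p - 1))⁻¹)
      = c ^ (p - 1) * (F ^ (p - 1))⁻¹ * (d * v') := by ring
  rw [e5]
  linarith

/-- Weighted Hardy inequality on a compact interval, for a positive weight `w` and a positive
primitive `F` of `-w`. -/
theorem hardy_interval {p b η : ℝ} (hp : 1 < p) (hb : b ≤ η) {u u' w F : ℝ → ℝ}
    (hu : ContinuousOn u (Icc b η)) (hud : ∀ t ∈ Ioo b η, HasDerivAt u (u' t) t)
    (hu' : ContinuousOn u' (Icc b η)) (hw : ContinuousOn w (Icc b η))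
    (hw0 : ∀ t ∈ Icc b η, 0 < w t) (hF : ContinuousOn F (Icc b η))
    (hF0 : ∀ t ∈ Icc b η, 0 < F t) (hFd : ∀ t ∈ Ioo b η, HasDerivAt F (-w t) t)
    (hub : u b = 0) :
    (1 - 1 / p) ^ p * (∫ t in b..η, |u t| ^ p * w t ^ (1 - p) / ((w t)⁻¹ * F t) ^ p) ≤
      (∫ t in b..η, |u' t| ^ p * w t ^ (1 - p)) +
        (1 - 1 / p) ^ (p - 1) * (|u η| ^ p * F η ^ (1 - p)) := by
  have hp0 : 0 < p := by linarith
  have hup : ContinuousOn (fun t => |u t| ^ p) (Icc b η) :=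
    hu.abs.rpow_const fun _ _ => Or.inr hp0.le
  have hu'p : ContinuousOn (fun t => |u' t| ^ p) (Icc b η) :=
    hu'.abs.rpow_const fun _ _ => Or.inr hp0.le
  have hwp : ContinuousOn (fun t => w t ^ (1 - p)) (Icc b η) :=
    hw.rpow_const fun t ht => Or.inl (hw0 t ht).ne'
  have hFp (r : ℝ) : ContinuousOn (fun t => F t ^ r) (Icc b η) :=
    hF.rpow_const fun t ht => Or.inl (hF0 t ht).ne'
  set D := deriv (fun x : ℝ => |x| ^ p)
  set G' : ℝ → ℝ := fun t => D (u t) * u' t * F t ^ (1 - p) +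
    |u t| ^ p * (-w t * (1 - p) * F t ^ (1 - p - 1))
  have hG'c : ContinuousOn G' (Icc b η) :=
    ((((continuous_deriv_abs_rpow hp).comp_continuousOn hu).mul hu').mul (hFp _)).add
      (hup.mul ((hw.neg.mul continuousOn_const).mul (hFp _)))
  have hG'i := hG'c.intervalIntegrable_of_Icc (μ := volume) hb
  have hG : ∫ t in b..η, G' t = |u η| ^ p * F η ^ (1 - p) := by
    rw [intervalIntegral.integral_eq_sub_of_hasDerivAt_of_le hb (hup.mul (hFp (1 - p)))
      (fun t ht => ?_) hG'i]
    · simp [hub, Real.zero_rpow hp0.ne']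
    · have h1 : HasDerivAt (fun x : ℝ => |x| ^ p) (D (u t)) (u t) :=
        (hasDerivAt_abs_rpow (u t) hp).differentiableAt.hasDerivAt
      exact (h1.comp t (hud t ht)).mul
        ((hFd t ht).rpow_const (Or.inl (hF0 t (Ioo_subset_Icc_self ht)).ne'))
  have hL : ContinuousOn (fun t => |u' t| ^ p * w t ^ (1 - p)) (Icc b η) := hu'p.mul hwp
  have hR : ContinuousOn (fun t => |u t| ^ p * w t ^ (1 - p) / ((w t)⁻¹ * F t) ^ p)
      (Icc b η) := by
    have hpos : ∀ t ∈ Icc b η, 0 < (w t)⁻¹ * F t := fun t ht =>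
      mul_pos (inv_pos.mpr (hw0 t ht)) (hF0 t ht)
    refine (hup.mul hwp).div (((hw.inv₀ fun t ht => (hw0 t ht).ne').mul hF).rpow_const
      fun t ht => Or.inl (hpos t ht).ne') fun t ht => ?_
    exact (Real.rpow_pos_of_pos (hpos t ht) p).ne'
  have hLi := hL.intervalIntegrable_of_Icc (μ := volume) hb
  have hRi := hR.intervalIntegrable_of_Icc (μ := volume) hb
  rw [← hG, ← intervalIntegral.integral_const_mul, ← intervalIntegral.integral_const_mul,
    ← intervalIntegral.integral_add hLi (hG'i.const_mul _)]
  refine intervalIntegral.integral_mono_on hb (hRi.const_mul _) (hLi.add (hG'i.const_mul _))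
    fun t ht => ?_
  exact hardy_pointwise hp (hw0 t ht) (hF0 t ht) (abs_deriv_abs_rpow hp (u t))

theorem intervalIntegral_eq_of_eq_zero_left {f : ℝ → ℝ} {a b c : ℝ} (hab : a ≤ b) (hbc : b ≤ c)
    (hf : ∀ t ∈ Ioc a b, f t = 0) : ∫ t in a..c, f t = ∫ t in b..c, f t := by
  rw [intervalIntegral.integral_of_le (hab.trans hbc), intervalIntegral.integral_of_le hbc]
  refine setIntegral_eq_of_subset_of_forall_sdiff_eq_zero measurableSet_Ioc
    (Ioc_subset_Ioc_left hab) fun t ht => hf t ⟨ht.1.1, ?_⟩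
  by_contra! h
  exact ht.2 ⟨h, ht.1.2⟩

/-- One-dimensional Hardy inequality with weight `e^{-(p-1)/t}` and
one-sided boundary term, for `C_c^1((0,η])` functions (compact support in `(0,η]`). -/
theorem hardy_exp_nondoubling_P (p μ η : ℝ) (hp : 1 < p) (hμ : 0 < μ) (hη : 0 < η)
    (u u' : ℝ → ℝ)
    (hu : ∀ t ∈ Set.Ioc (0:ℝ) η, HasDerivWithinAt u (u' t) (Set.Ioc (0:ℝ) η) t)
    (hu'c : ContinuousOn u' (Set.Ioc (0:ℝ) η))
    (hsupp : ∃ a, 0 < a ∧ ∀ t ≤ a, u t = 0) :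
    (∫ t in (0:ℝ)..η, |u' t| ^ p * Real.exp (-(p - 1) / t))
      + ((1 - 1 / p) ^ p) ^ ((p - 1) / p) * μ ^ (1 - p) * |u η| ^ p
    ≥ (1 - 1 / p) ^ p *
        ∫ t in (0:ℝ)..η, |u t| ^ p * Real.exp (-(p - 1) / t)
          / (Real.exp (-1 / t) * ((∫ s in t..η, Real.exp (1 / s)) + μ)) ^ p := by
  obtain ⟨a, ha, hua⟩ := hsupp
  have hp0 : 0 < p := by linarith
  have hc : 0 ≤ 1 - 1 / p := by
    rw [sub_nonneg, div_le_one hp0]; exact hp.le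
  obtain ⟨b, hb0, hba, hbη⟩ : ∃ b, 0 < b ∧ b < a ∧ b < η := by
    obtain ⟨b, hb0, hb⟩ := exists_between (lt_min ha hη)
    exact ⟨b, hb0, lt_min_iff.mp hb⟩
  have hsub : Icc b η ⊆ Ioc 0 η := fun t ht => ⟨hb0.trans_le ht.1, ht.2⟩
  have hu'0 : ∀ t ∈ Ioc 0 b, u' t = 0 := fun t ht => by
    have hta : t < a := ht.2.trans_lt hba
    have hd := (hu t ⟨ht.1, ht.2.trans hbη.le⟩).hasDerivAt
      (Ioc_mem_nhds ht.1 (ht.2.trans_lt hbη))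
    refine hd.unique ((hasDerivAt_const t (0 : ℝ)).congr_of_eventuallyEq ?_)
    filter_upwards [Iio_mem_nhds hta] with s hs using hua s (le_of_lt hs)
  have hwc : ContinuousOn (fun s : ℝ => Real.exp (1 / s)) (Ioi 0) :=
    Real.continuous_exp.comp_continuousOn
      (continuousOn_const.div continuousOn_id fun s hs => ne_of_gt hs)
  have hwi : ∀ t, 0 < t → IntervalIntegrable (fun s : ℝ => Real.exp (1 / s)) volume t η :=
    fun t ht => (hwc.mono fun s hs => (lt_min ht hη).trans_le hs.1).intervalIntegrable
  have hFd : ∀ t, 0 < t → HasDerivAt (fun t => (∫ s in t..η, Real.exp (1 / s)) + μ)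
      (-Real.exp (1 / t)) t := fun t ht =>
    (intervalIntegral.integral_hasDerivAt_left (hwi t ht)
      (hwc.stronglyMeasurableAtFilter isOpen_Ioi t ht)
      (hwc.continuousAt (Ioi_mem_nhds ht))).add_const μ
  have key := hardy_interval (u := u) (u' := u') (w := fun t => Real.exp (1 / t))
    (F := fun t => (∫ s in t..η, Real.exp (1 / s)) + μ) hp hbη.le
    (fun t ht => ((hu t (hsub ht)).continuousWithinAt).mono hsub)
    (fun t ht => (hu t (hsub (Ioo_subset_Icc_self ht))).hasDerivAt
      (Ioc_mem_nhds (hb0.trans ht.1) ht.2))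
    (hu'c.mono hsub) (hwc.mono fun t ht => (hsub ht).1) (fun t _ => Real.exp_pos _)
    (fun t ht => (hFd t (hsub ht).1).continuousAt.continuousWithinAt)
    (fun t ht => add_pos_of_nonneg_of_pos
      (intervalIntegral.integral_nonneg ht.2 fun s _ => (Real.exp_pos _).le) hμ)
    (fun t ht => hFd t (hb0.trans ht.1)) (hua b hba.le)
  have hexp (t : ℝ) : Real.exp (1 / t) ^ (1 - p) = Real.exp (-(p - 1) / t) := by
    rw [← Real.exp_mul]; ring_nf
  have hinv (t : ℝ) : (Real.exp (1 / t))⁻¹ = Real.exp (-1 / t) := by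
    rw [← Real.exp_neg]; ring_nf
  simp only [hexp, hinv, intervalIntegral.integral_same, zero_add] at key
  rw [intervalIntegral_eq_of_eq_zero_left hb0.le hbη.le fun t ht => by
      rw [hu'0 t ht, abs_zero, Real.zero_rpow hp0.ne', zero_mul],
    intervalIntegral_eq_of_eq_zero_left hb0.le hbη.le fun t ht => by
      rw [hua t (ht.2.trans hba.le), abs_zero, Real.zero_rpow hp0.ne', zero_mul, zero_div],
    ← Real.rpow_mul hc, mul_div_cancel₀ _ hp0.ne', mul_assoc, mul_comm (μ ^ (1 - p))]
  exact key
end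

section
/- Let 1<p<∞ and η>0. Then for every u ∈ C_c^1((0,η]) one has ∫_0^η |u'(t)|^p e^{(p-1)/t} dt ≥ Λ_p ∫_0^η |u(t)|^p e^{(p-1)/t} / ( e^{1/t} ∫_0^t e^{-1/s} ds )^p dt + Λ_p^{1/p'} ( ∫_0^η e^{-1/s} ds )^{1-p} |u(η)|^p. -/
open MeasureTheory Set

theorem mul_rpow_sub_one_le_rpow_add_rpow {p X Y : ℝ} (hp : 1 < p) (hX : 0 ≤ X) (hY : 0 ≤ Y) :
    p * (X * Y ^ (p - 1)) ≤ X ^ p + (p - 1) * Y ^ p := by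
  have hpq : p.HolderConjugate (p / (p - 1)) := Real.HolderConjugate.conjExponent hp
  have h := Real.young_inequality_of_nonneg hX (Real.rpow_nonneg hY (p - 1)) hpq
  have h1 : p - 1 ≠ 0 := by linarith
  rw [← Real.rpow_mul hY, mul_div_cancel₀ p h1] at h
  have h2 : p * (X ^ p / p + Y ^ p / (p / (p - 1))) = X ^ p + (p - 1) * Y ^ p := by
    field_simp
  rw [← h2]
  exact mul_le_mul_of_nonneg_left h (by linarith)

theorem hardy_pointwise_le {p w G : ℝ} (hp : 1 < p) (hw : 0 < w) (hG : 0 < G) (x y : ℝ) :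
    (1 - 1 / p) ^ (p - 1) * (w * (1 - p) * G ^ (1 - p - 1) * |x| ^ p
        + G ^ (1 - p) * (p * |x| ^ (p - 2) * x * y))
      ≤ |y| ^ p * w ^ (1 - p)
        - (1 - 1 / p) ^ p * (|x| ^ p * w ^ (1 - p) / (w⁻¹ * G) ^ p) := by
  have hp0 : 0 < p := by linarith
  have hc : 0 < 1 - 1 / p := by
    rw [sub_pos, div_lt_one hp0]; exact hp
  rcases eq_or_ne x 0 with rfl | hx
  · simp only [abs_zero, Real.zero_rpow hp0.ne', mul_zero, zero_mul, add_zero, zero_div, sub_zero]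
    positivity
  have hx' : 0 < |x| := abs_pos.mpr hx
  have hxy : |x| ^ (p - 2) * x * y ≤ |x| ^ p / |x| * |y| := by
    have h1 : |x| ^ p / |x| * |y| = |x| ^ (p - 2) * |x * y| := by
      rw [Real.rpow_sub hx', Real.rpow_two, abs_mul]
      field_simp
    rw [h1, mul_assoc]
    exact mul_le_mul_of_nonneg_left (le_abs_self _) (by positivity)
  have hcp : (1 - 1 / p) * p = p - 1 := by field_simp
  generalize 1 - 1 / p = c at hc hcp ⊢
  have hY : 0 < c * |x| / G := by positivity
  have key := mul_rpow_sub_one_le_rpow_add_rpow hp (X := |y| / w) (by positivity) hY.le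
  rw [Real.rpow_sub_one hY.ne', Real.div_rpow (by positivity) hG.le,
    Real.mul_rpow hc.le hx'.le, Real.div_rpow (abs_nonneg y) hw.le] at key
  rw [Real.rpow_sub_one hc.ne', Real.rpow_sub_one hG.ne', Real.rpow_sub hG, Real.rpow_sub hw,
    Real.rpow_one, Real.rpow_one, Real.mul_rpow (by positivity) hG.le, Real.inv_rpow hw.le]
  have hcP : 0 < c ^ p := by positivity
  have hGP : 0 < G ^ p := by positivity
  have hwP : 0 < w ^ p := by positivity
  generalize c ^ p = C at *
  generalize G ^ p = K at *
  generalize w ^ p = W at *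
  generalize |y| ^ p = Q at *
  have hxy' := mul_le_mul_of_nonneg_left hxy (show 0 ≤ C / c * (G / K) * p by positivity)
  have key' := mul_le_mul_of_nonneg_left key hw.le
  have e1 : w * (p * (|y| / w * (C * |x| ^ p / K / (c * |x| / G))))
      = C / c * (G / K) * p * (|x| ^ p / |x| * |y|) := by
    field_simp
  rw [e1] at key'
  generalize |x| ^ p = P at *
  generalize |x| ^ (p - 2) = R at *
  have e2 : C / c * (w * (1 - p) * (G / K / G) * P + G / K * (p * R * x * y))
      = C / c * (G / K) * p * (R * x * y) - p * (C * w / K * P) := by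
    have : 1 - p = -(c * p) := by linarith
    rw [this]
    field_simp
    ring
  have e3 : Q * (w / W) - C * (P * (w / W) / (W⁻¹ * K))
      = w * (Q / W + (p - 1) * (C * P / K)) - p * (C * w / K * P) := by
    field_simp
    ring
  rw [e2, e3]
  linarith

theorem intervalIntegrable_exp_neg_one_div (a b : ℝ) (ha : 0 ≤ a) (hb : 0 ≤ b) :
    IntervalIntegrable (fun s : ℝ => Real.exp (-1 / s)) volume a b := by
  rw [intervalIntegrable_iff]
  refine Measure.integrableOn_of_bounded (M := 1) (by simp [uIoc])
    (Measurable.aestronglyMeasurable (by fun_prop)) ?_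
  refine (ae_restrict_mem measurableSet_uIoc).mono fun s hs => ?_
  have hs0 : 0 ≤ s := (le_min ha hb).trans hs.1.le
  rw [Real.norm_eq_abs, Real.abs_exp, Real.exp_le_one_iff]
  exact div_nonpos_of_nonpos_of_nonneg (by norm_num) hs0

theorem integral_exp_neg_one_div_pos {t : ℝ} (ht : 0 < t) :
    0 < ∫ s in (0 : ℝ)..t, Real.exp (-1 / s) :=
  intervalIntegral.intervalIntegral_pos_of_pos
    (intervalIntegrable_exp_neg_one_div 0 t le_rfl ht.le) (fun _ => Real.exp_pos _) ht

theorem hasDerivAt_integral_exp_neg_one_div {t : ℝ} (ht : 0 < t) :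
    HasDerivAt (fun t => ∫ s in (0 : ℝ)..t, Real.exp (-1 / s)) (Real.exp (-1 / t)) t := by
  refine intervalIntegral.integral_hasDerivAt_right
    (intervalIntegrable_exp_neg_one_div 0 t le_rfl ht.le)
    (Measurable.stronglyMeasurable (by fun_prop)).stronglyMeasurableAtFilter ?_
  exact Real.continuous_exp.continuousAt.comp
    (continuousAt_const.div continuousAt_id ht.ne')

theorem integral_eq_integral_of_eq_zero {f : ℝ → ℝ} {a η : ℝ} (ha : 0 ≤ a)
    (hf : ∀ t ∈ Ioc 0 a, f t = 0) (hi : IntervalIntegrable f volume a η) :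
    ∫ t in (0 : ℝ)..η, f t = ∫ t in a..η, f t := by
  have h0 : ∀ t ∈ uIoc 0 a, f t = 0 := by rwa [uIoc_of_le ha]
  have hi0 : IntervalIntegrable f volume 0 a :=
    (intervalIntegrable_congr h0).mpr intervalIntegrable_const
  rw [← intervalIntegral.integral_add_adjacent_intervals hi0 hi,
    intervalIntegral.integral_zero_ae (Filter.Eventually.of_forall h0), zero_add]

/-- One-dimensional Hardy inequality with weight `e^{(p-1)/t}` and
one-sided boundary term, for `C_c^1((0,η])` functions. -/
theorem hardy_exp_nondoubling_Q (p η : ℝ) (hp : 1 < p) (hη : 0 < η)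
    (u u' : ℝ → ℝ)
    (hu : ∀ t ∈ Set.Ioc (0:ℝ) η, HasDerivWithinAt u (u' t) (Set.Ioc (0:ℝ) η) t)
    (hu'c : ContinuousOn u' (Set.Ioc (0:ℝ) η))
    (hsupp : ∃ a, 0 < a ∧ ∀ t ≤ a, u t = 0) :
    (∫ t in (0:ℝ)..η, |u' t| ^ p * Real.exp ((p - 1) / t))
    ≥ (1 - 1 / p) ^ p *
        (∫ t in (0:ℝ)..η, |u t| ^ p * Real.exp ((p - 1) / t)
          / (Real.exp (1 / t) * ∫ s in (0:ℝ)..t, Real.exp (-1 / s)) ^ p)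
      + ((1 - 1 / p) ^ p) ^ ((p - 1) / p) *
          (∫ s in (0:ℝ)..η, Real.exp (-1 / s)) ^ (1 - p) * |u η| ^ p := by
  obtain ⟨b, hb, hub⟩ := hsupp
  have hp0 : 0 < p := by linarith
  have hc : 0 < 1 - 1 / p := by
    rw [sub_pos, div_lt_one hp0]; exact hp
  obtain ⟨a, ha, hab, haη⟩ : ∃ a, 0 < a ∧ a < b ∧ a < η := by
    obtain ⟨a, h0, h1⟩ := exists_between (lt_min hb hη)
    exact ⟨a, h0, h1.trans_le (min_le_left _ _), h1.trans_le (min_le_right _ _)⟩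
  have hderiv : ∀ t ∈ Ioo 0 η, HasDerivAt u (u' t) t := fun t ht =>
    (hu t ⟨ht.1, ht.2.le⟩).hasDerivAt (Ioc_mem_nhds ht.1 ht.2)
  have hu'0 : ∀ t ∈ Ioc 0 a, u' t = 0 := fun t ht => by
    refine (hderiv t ⟨ht.1, ht.2.trans_lt haη⟩).unique ?_
    refine (hasDerivAt_const t (0 : ℝ)).congr_of_eventuallyEq ?_
    filter_upwards [Iio_mem_nhds (ht.2.trans_lt hab)] with s hs using hub s (le_of_lt hs)
  set F : ℝ → ℝ := fun t => ∫ s in (0:ℝ)..t, Real.exp (-1 / s) with hF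
  have hFpos : ∀ t, 0 < t → 0 < F t := fun t ht => integral_exp_neg_one_div_pos ht
  have hFd : ∀ t, 0 < t → HasDerivAt F (Real.exp (-1 / t)) t :=
    fun t ht => hasDerivAt_integral_exp_neg_one_div ht
  have hsub : Icc a η ⊆ Ioc 0 η := fun t ht => ⟨ha.trans_le ht.1, ht.2⟩
  have hpos : ∀ t ∈ Icc a η, 0 < t := fun t ht => (hsub ht).1
  have hFc : ContinuousOn F (Icc a η) := fun t ht =>
    (hFd t (hpos t ht)).continuousAt.continuousWithinAt
  have huc : ContinuousOn u (Icc a η) := fun t ht =>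
    ((hu t (hsub ht)).continuousWithinAt).mono hsub
  have hu'c' : ContinuousOn u' (Icc a η) := hu'c.mono hsub
  have hexpc : ∀ k : ℝ, ContinuousOn (fun t => Real.exp (k / t)) (Icc a η) := fun k =>
    Real.continuous_exp.comp_continuousOn
      (continuousOn_const.div continuousOn_id fun t ht => (hpos t ht).ne')
  have hfc : ContinuousOn (fun t => |u' t| ^ p * Real.exp ((p - 1) / t)) (Icc a η) :=
    (hu'c'.abs.rpow_const fun _ _ => Or.inr hp0.le).mul (hexpc _)
  have hgc : ContinuousOn (fun t => |u t| ^ p * Real.exp ((p - 1) / t)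
      / (Real.exp (1 / t) * F t) ^ p) (Icc a η) := by
    refine ((huc.abs.rpow_const fun _ _ => Or.inr hp0.le).mul (hexpc _)).div
      (((hexpc 1).mul hFc).rpow_const fun _ _ => Or.inr hp0.le) fun t ht => ?_
    have := hFpos t (hpos t ht)
    positivity
  have hfi := hfc.intervalIntegrable_of_Icc haη.le (μ := volume)
  have hgi := hgc.intervalIntegrable_of_Icc haη.le (μ := volume)
  have hphic : ContinuousOn (fun t => (1 - 1 / p) ^ (p - 1) * (F t ^ (1 - p) * |u t| ^ p))
      (Icc a η) :=
    continuousOn_const.mul ((hFc.rpow_const fun t ht => Or.inl (hFpos t (hpos t ht)).ne').mul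
      (huc.abs.rpow_const fun _ _ => Or.inr hp0.le))
  have main := intervalIntegral.sub_le_integral_of_hasDeriv_right_of_le haη.le hphic
    (g' := fun t => (1 - 1 / p) ^ (p - 1) *
      (Real.exp (-1 / t) * (1 - p) * F t ^ (1 - p - 1) * |u t| ^ p
        + F t ^ (1 - p) * (p * |u t| ^ (p - 2) * u t * u' t)))
    (φ := fun t => |u' t| ^ p * Real.exp ((p - 1) / t) -
      (1 - 1 / p) ^ p * (|u t| ^ p * Real.exp ((p - 1) / t) / (Real.exp (1 / t) * F t) ^ p))
    (fun t ht => by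
      have ht0 : 0 < t := ha.trans ht.1
      exact ((((hFd t ht0).rpow_const (Or.inl (hFpos t ht0).ne')).mul
        ((hasDerivAt_abs_rpow (u t) hp).comp t (hderiv t ⟨ht0, ht.2⟩))).const_mul
          _).hasDerivWithinAt)
    ((hfc.sub (continuousOn_const.mul hgc)).integrableOn_Icc)
    (fun t ht => by
      have ht0 : 0 < t := ha.trans ht.1
      have h := hardy_pointwise_le hp (Real.exp_pos (-1 / t)) (hFpos t ht0) (u t) (u' t)
      have e1 : Real.exp (-1 / t) ^ (1 - p) = Real.exp ((p - 1) / t) := by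
        rw [← Real.exp_mul]; congr 1; ring
      have e2 : (Real.exp (-1 / t))⁻¹ = Real.exp (1 / t) := by
        rw [← Real.exp_neg]; congr 1; ring
      rwa [e1, e2] at h)
  rw [intervalIntegral.integral_sub hfi (hgi.const_mul _), intervalIntegral.integral_const_mul,
    hub a hab.le, abs_zero, Real.zero_rpow hp0.ne', mul_zero, mul_zero, sub_zero] at main
  have hcc : ((1 - 1 / p) ^ p) ^ ((p - 1) / p) = (1 - 1 / p) ^ (p - 1) := by
    rw [← Real.rpow_mul hc.le, mul_div_cancel₀ _ hp0.ne']
  rw [hcc, integral_eq_integral_of_eq_zero ha.le (fun t ht => by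
      rw [hu'0 t ht, abs_zero, Real.zero_rpow hp0.ne', zero_mul]) hfi,
    integral_eq_integral_of_eq_zero ha.le (fun t ht => by
      rw [hub t (ht.2.trans hab.le), abs_zero, Real.zero_rpow hp0.ne', zero_mul, zero_div]) hgi]
  linarith
end

section
/- Let 1<p<∞, μ>0, η>0 and w ∈ P(ℝ₊). Then for every u ∈ C_c^1((0,η]) one has ∫_0^η |u'(t)|^p W_p(t) dt + Λ_p^{1/p'} μ^{1-p} |u(η)|^p ≥ Λ_p ∫_0^η |u(t)|^p W_p(t) / F_η(t)^p dt. -/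
open MeasureTheory Set

/-- `f_η(t) = μ + ∫_t^η w(s)⁻¹ ds`  (case `w ∈ P(ℝ₊)`). -/
noncomputable def fP (w : ℝ → ℝ) (μ η t : ℝ) : ℝ := μ + ∫ s in t..η, (w s)⁻¹

/-- `F_η(t) = w(t) f_η(t)`. -/
noncomputable def FP (w : ℝ → ℝ) (μ η t : ℝ) : ℝ := w t * fP w μ η t

/-- `W_p(t) = w(t)^(p-1)`. -/
noncomputable def Wp (w : ℝ → ℝ) (p t : ℝ) : ℝ := w t ^ (p - 1)

/-- Young's inequality in the form `p A B^(p-1) ≤ A^p + (p-1) B^p`. -/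
lemma mul_rpow_sub_one_le_rpow_add {p A B : ℝ} (hp : 1 < p) (hA : 0 ≤ A) (hB : 0 ≤ B) :
    p * (A * B ^ (p - 1)) ≤ A ^ p + (p - 1) * B ^ p := by
  have hp0 : 0 < p := by linarith
  have hp1 : p - 1 ≠ 0 := by linarith
  have hpq : p.HolderConjugate (p / (p - 1)) := Real.HolderConjugate.conjExponent hp
  have h := Real.young_inequality_of_nonneg hA (Real.rpow_nonneg hB (p - 1)) hpq
  rw [← Real.rpow_mul hB, mul_div_cancel₀ _ hp1] at h
  calc p * (A * B ^ (p - 1)) ≤ p * (A ^ p / p + B ^ p / (p / (p - 1))) := by gcongr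
    _ = A ^ p + (p - 1) * B ^ p := by field_simp

/-- The pointwise inequality behind Hardy's inequality, before rescaling by the weights. -/
lemma neg_deriv_le_rpow_sub {p x A : ℝ} (hp : 1 < p) :
    -((1 - 1 / p) ^ (p - 1) * (p * |x| ^ (p - 2) * x * A + (p - 1) * |x| ^ p))
      ≤ |A| ^ p - (1 - 1 / p) ^ p * |x| ^ p := by
  have hp0 : 0 < p := by linarith
  set c : ℝ := 1 - 1 / p with hc
  have hc0 : 0 < c := by
    rw [hc, sub_pos, div_lt_one hp0]
    exact hp
  have hpc : p * c = p - 1 := by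
    rw [hc]
    field_simp
  have hx : |x| ^ (p - 2) * |x| = |x| ^ (p - 1) := by
    rcases eq_or_ne x 0 with rfl | h
    · rw [abs_zero, mul_zero, Real.zero_rpow (by linarith)]
    · rw [← Real.rpow_add_one (abs_ne_zero.mpr h)]
      ring_nf
  have young := mul_rpow_sub_one_le_rpow_add hp (abs_nonneg A)
    (mul_nonneg hc0.le (abs_nonneg x))
  rw [Real.mul_rpow hc0.le (abs_nonneg x), Real.mul_rpow hc0.le (abs_nonneg x)] at young
  have hcp : c ^ p = c ^ (p - 1) * c := by
    rw [← Real.rpow_add_one hc0.ne']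
    ring_nf
  have hsign : -(|x| ^ (p - 2) * x * A) ≤ |x| ^ (p - 1) * |A| := by
    have := neg_abs_le (|x| ^ (p - 2) * x * A)
    rw [abs_mul, abs_mul, abs_of_nonneg (Real.rpow_nonneg (abs_nonneg x) _), hx] at this
    linarith
  have hscaled := mul_le_mul_of_nonneg_left hsign
    (mul_nonneg hp0.le (Real.rpow_nonneg hc0.le (p - 1)))
  rw [hcp] at young ⊢
  have hcoef : (p - 1) * (c ^ (p - 1) * c * |x| ^ p)
      = (p - 1) * c ^ (p - 1) * |x| ^ p - c ^ (p - 1) * c * |x| ^ p := by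
    have : (p - 1) * c = (p - 1) - c := by linarith
    linear_combination c ^ (p - 1) * |x| ^ p * this
  linarith

/-- The pointwise inequality: the integrand of the Hardy deficit dominates the derivative of
`-(1-1/p)^(p-1) |u|^p f^(1-p)` when `f' = -w⁻¹`. -/
lemma neg_deriv_le_hardy_integrand {p x y w f : ℝ} (hp : 1 < p) (hw : 0 < w) (hf : 0 < f) :
    -((1 - 1 / p) ^ (p - 1) * (p * |x| ^ (p - 2) * x * y * f ^ (1 - p)
        + |x| ^ p * (-w⁻¹ * (1 - p) * f ^ (1 - p - 1))))
      ≤ |y| ^ p * w ^ (p - 1) - (1 - 1 / p) ^ p * (|x| ^ p * w ^ (p - 1) / (w * f) ^ p) := by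
  have h := mul_le_mul_of_nonneg_right (neg_deriv_le_rpow_sub (x := x) (A := y * (w * f)) hp)
    (mul_nonneg (inv_nonneg.mpr hw.le) (Real.rpow_nonneg hf.le (-p)))
  have hwf := mul_pos hw hf
  rw [abs_mul, abs_of_pos hwf, Real.mul_rpow (abs_nonneg y) hwf.le,
    Real.mul_rpow hw.le hf.le] at h
  have hf1 : f ^ (1 - p) = f * f ^ (-p) := by
    rw [sub_eq_add_neg, Real.rpow_add hf, Real.rpow_one]
  have hf2 : f ^ (1 - p - 1) = f ^ (-p) := by ring_nf
  have hwp : w ^ (p - 1) = w ^ p * w⁻¹ := by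
    rw [Real.rpow_sub_one hw.ne', div_eq_mul_inv]
  have hfp : f ^ (-p) = (f ^ p)⁻¹ := Real.rpow_neg hf.le p
  have hwp0 := (Real.rpow_pos_of_pos hw p).ne'
  have hfp0 := (Real.rpow_pos_of_pos hf p).ne'
  rw [hf1, hf2, hwp, hfp, Real.mul_rpow hw.le hf.le]
  rw [hfp] at h
  generalize 1 - 1 / p = c at h ⊢
  refine (le_of_eq ?_).trans (h.trans (le_of_eq ?_))
  · field_simp
    ring
  · field_simp

/-- Weighted Hardy inequality with one-sided boundary term for
`w ∈ P(ℝ₊)` (i.e. `1/w` non-integrable near `0`). -/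
theorem hardy_P (p μ η : ℝ) (hp : 1 < p) (hμ : 0 < μ) (hη : 0 < η)
    (w : ℝ → ℝ)
    (hw_pos : ∀ t, 0 < t → 0 < w t)
    (hw_smooth : ContDiffOn ℝ 1 w (Set.Ioi 0))
    (hw_lim : ∃ a : ENNReal, Filter.Tendsto (fun t => ENNReal.ofReal (w t))
        (nhdsWithin (0:ℝ) (Set.Ioi 0)) (nhds a))
    (hwP : ∀ b, 0 < b → ¬ MeasureTheory.IntegrableOn (fun s => (w s)⁻¹) (Set.Ioo 0 b))
    (u u' : ℝ → ℝ)
    (hu : ∀ t ∈ Set.Ioc (0:ℝ) η, HasDerivWithinAt u (u' t) (Set.Ioc (0:ℝ) η) t)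
    (hu'c : ContinuousOn u' (Set.Ioc (0:ℝ) η))
    (hsupp : ∃ a, 0 < a ∧ ∀ t ≤ a, u t = 0) :
    (∫ t in (0:ℝ)..η, |u' t| ^ p * Wp w p t)
      + ((1 - 1 / p) ^ p) ^ ((p - 1) / p) * μ ^ (1 - p) * |u η| ^ p
    ≥ (1 - 1 / p) ^ p *
        ∫ t in (0:ℝ)..η, |u t| ^ p * Wp w p t / FP w μ η t ^ p := by
  obtain ⟨a, ha, hua⟩ := hsupp
  have hp0 : 0 < p := by linarith
  set c : ℝ := 1 - 1 / p with hc
  have hc0 : 0 < c := by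
    rw [hc, sub_pos, div_lt_one hp0]
    exact hp
  obtain ⟨b, hb, hba, hbη⟩ : ∃ b, 0 < b ∧ b < a ∧ b < η :=
    ⟨min a η / 2, by positivity, by linarith [min_le_left a η, lt_min ha hη],
      by linarith [min_le_right a η, lt_min ha hη]⟩
  have hsub : Icc b η ⊆ Ioc 0 η := fun t ht => ⟨hb.trans_le ht.1, ht.2⟩
  have hwc : ContinuousOn w (Ioi 0) := hw_smooth.continuousOn
  have hwinv : ContinuousOn (fun s => (w s)⁻¹) (Ioi 0) :=
    hwc.inv₀ fun t ht => (hw_pos t ht).ne'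
  have hint : ∀ t, 0 < t → IntervalIntegrable (fun s => (w s)⁻¹) volume t η := fun t ht =>
    (hwinv.mono fun s hs => (lt_min ht hη).trans_le hs.1).intervalIntegrable
  have hfpos : ∀ t ∈ Ioc 0 η, 0 < fP w μ η t := fun t ht =>
    add_pos_of_pos_of_nonneg hμ <| intervalIntegral.integral_nonneg ht.2 fun s hs =>
      inv_nonneg.mpr (hw_pos s (ht.1.trans_le hs.1)).le
  have hfderiv : ∀ t, 0 < t → HasDerivAt (fP w μ η) (-(w t)⁻¹) t := fun t ht =>
    (intervalIntegral.integral_hasDerivAt_left (hint t ht)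
      (hwinv.stronglyMeasurableAtFilter isOpen_Ioi t ht)
      (hwinv.continuousAt (Ioi_mem_nhds ht))).const_add μ
  have hfc : ContinuousOn (fP w μ η) (Icc b η) := fun t ht =>
    (hfderiv t (hb.trans_le ht.1)).continuousAt.continuousWithinAt
  have huc : ContinuousOn u (Icc b η) := fun t ht =>
    ((hu t (hsub ht)).mono hsub).continuousWithinAt
  have hwcb : ContinuousOn w (Icc b η) := hwc.mono fun t ht => hb.trans_le ht.1
  have hWc : ContinuousOn (Wp w p) (Icc b η) :=
    hwcb.rpow_const fun t _ => Or.inr (by linarith)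
  have hLc : ContinuousOn (fun t => |u' t| ^ p * Wp w p t) (Icc b η) :=
    ((hu'c.mono hsub).abs.rpow_const fun t _ => Or.inr hp0.le).mul hWc
  have hFpos : ∀ t ∈ Ioc 0 η, 0 < FP w μ η t := fun t ht =>
    mul_pos (hw_pos t ht.1) (hfpos t ht)
  have hRc : ContinuousOn (fun t => |u t| ^ p * Wp w p t / FP w μ η t ^ p) (Icc b η) :=
    ((huc.abs.rpow_const fun t _ => Or.inr hp0.le).mul hWc).div
      ((hwcb.mul hfc).rpow_const fun t _ => Or.inr hp0.le)
      fun t ht => (Real.rpow_pos_of_pos (hFpos t (hsub ht)) p).ne'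
  have hu'0 : ∀ t ∈ Ioc 0 b, u' t = 0 := by
    intro t ht
    have hd : HasDerivAt u (u' t) t :=
      (hu t ⟨ht.1, ht.2.trans hbη.le⟩).hasDerivAt (Ioc_mem_nhds ht.1 (ht.2.trans_lt hbη))
    refine hd.unique ((hasDerivAt_const t (0 : ℝ)).congr_of_eventuallyEq ?_)
    filter_upwards [Iio_mem_nhds (ht.2.trans_lt hba)] with s hs using hua s hs.le
  have hrestrict : ∀ g : ℝ → ℝ, (∀ t ∈ Ioc 0 b, g t = 0) →
      ∫ t in (0 : ℝ)..η, g t = ∫ t in b..η, g t := by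
    intro g hg
    rw [intervalIntegral.integral_of_le hη.le, intervalIntegral.integral_of_le hbη.le]
    refine setIntegral_eq_of_subset_of_forall_sdiff_eq_zero measurableSet_Ioc
      (fun t ht => ⟨hb.trans ht.1, ht.2⟩) fun t ht => hg t ⟨ht.1.1, ?_⟩
    by_contra h
    exact ht.2 ⟨not_le.mp h, ht.1.2⟩
  rw [hrestrict _ fun t ht => by rw [hu'0 t ht, abs_zero, Real.zero_rpow hp0.ne', zero_mul],
    hrestrict _ fun t ht => by
      rw [hua t (ht.2.trans hba.le), abs_zero, Real.zero_rpow hp0.ne', zero_mul, zero_div]]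
  have hLi : IntervalIntegrable (fun t => |u' t| ^ p * Wp w p t) volume b η :=
    hLc.intervalIntegrable_of_Icc hbη.le
  have hRi : IntervalIntegrable (fun t => c ^ p * (|u t| ^ p * Wp w p t / FP w μ η t ^ p))
      volume b η :=
    (hRc.intervalIntegrable_of_Icc hbη.le).const_mul _
  have key := intervalIntegral.sub_le_integral_of_hasDeriv_right_of_le hbη.le
    (g := fun t => -(c ^ (p - 1) * (|u t| ^ p * fP w μ η t ^ (1 - p))))
    (g' := fun t => -(c ^ (p - 1) * (p * |u t| ^ (p - 2) * u t * u' t * fP w μ η t ^ (1 - p)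
        + |u t| ^ p * (-(w t)⁻¹ * (1 - p) * fP w μ η t ^ (1 - p - 1)))))
    (φ := fun t => |u' t| ^ p * Wp w p t - c ^ p * (|u t| ^ p * Wp w p t / FP w μ η t ^ p))
    (((huc.abs.rpow_const fun t _ => Or.inr hp0.le).mul
      (hfc.rpow_const fun t ht => Or.inl (hfpos t (hsub ht)).ne')).const_smul
        (c ^ (p - 1))).neg
    (fun t ht => by
      have htη : t ∈ Ioc 0 η := hsub (Ioo_subset_Icc_self ht)
      have hd : HasDerivAt u (u' t) t :=
        (hu t htη).hasDerivAt (Ioc_mem_nhds htη.1 ht.2)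
      have hup := (hasDerivAt_abs_rpow (u t) hp).comp t hd
      have hfp := (hfderiv t htη.1).rpow_const (p := 1 - p) (Or.inl (hfpos t htη).ne')
      exact ((hup.mul hfp).const_mul (c ^ (p - 1))).neg.hasDerivWithinAt)
    ((hLc.sub (hRc.const_smul (c ^ p))).integrableOn_Icc)
    (fun t ht => neg_deriv_le_hardy_integrand hp
      (hw_pos t (hb.trans ht.1)) (hfpos t (hsub (Ioo_subset_Icc_self ht))))
  rw [intervalIntegral.integral_sub hLi hRi, intervalIntegral.integral_const_mul] at key
  have hfη : fP w μ η η = μ := by simp [fP]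
  rw [hua b hba.le, abs_zero, Real.zero_rpow hp0.ne', hfη] at key
  have hΛ : (c ^ p) ^ ((p - 1) / p) = c ^ (p - 1) := by
    rw [← Real.rpow_mul hc0.le, mul_div_cancel₀ _ hp0.ne']
  rw [hΛ]
  linarith
end

section
/- Let 1<p<∞, μ>0, η>0 and w ∈ P(ℝ₊). Then there exist positive numbers C and L (depending only on w, p, η, μ, not on u) such that for every u ∈ C_c^1((0,η]): ∫_0^η |u'(t)|^p W_p(t) dt ≥ Λ_p ∫_0^η |u(t)|^p W_p(t) / F_η(t)^p dt + C ∫_0^η |u(t)|^p W_p(t) / ( F_η(t)^p G_η(t)^2 ) dt − L |u(η)|^p. -/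
open MeasureTheory Set

/-- `G_η(t) = μ + ∫_t^η F_η(s)⁻¹ ds`. -/
noncomputable def GP (w : ℝ → ℝ) (μ η t : ℝ) : ℝ := μ + ∫ s in t..η, (FP w μ η s)⁻¹

/-- Differentiation of `t ↦ μ + ∫_t^η g` with respect to the lower end point. -/
lemma hasDerivAt_const_add_integral_left {g : ℝ → ℝ} {S : Set ℝ} {μ η t : ℝ} (hS : IsOpen S)
    (hg : ContinuousOn g S) (ht : t ≤ η) (hsub : Icc t η ⊆ S) :
    HasDerivAt (fun x => μ + ∫ s in x..η, g s) (-g t) t := by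
  have htS : t ∈ S := hsub (left_mem_Icc.2 ht)
  refine (intervalIntegral.integral_hasDerivAt_left ?_
    (hg.stronglyMeasurableAtFilter hS t htS) (hg.continuousAt (hS.mem_nhds htS))).const_add μ
  refine ContinuousOn.intervalIntegrable ?_
  rw [uIcc_of_le ht]
  exact hg.mono hsub

section weights

variable {w : ℝ → ℝ} {μ η : ℝ}

lemma le_fP (hw_pos : ∀ t, 0 < t → 0 < w t) {t : ℝ} (ht : t ∈ Ioc 0 η) : μ ≤ fP w μ η t := by
  have : 0 ≤ ∫ s in t..η, (w s)⁻¹ := intervalIntegral.integral_nonneg ht.2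
    fun s hs => (inv_pos.2 (hw_pos s (ht.1.trans_le hs.1))).le
  unfold fP
  linarith

lemma FP_pos (hμ : 0 < μ) (hw_pos : ∀ t, 0 < t → 0 < w t) {t : ℝ} (ht : t ∈ Ioc 0 η) :
    0 < FP w μ η t :=
  mul_pos (hw_pos t ht.1) (hμ.trans_le (le_fP hw_pos ht))

lemma le_GP (hμ : 0 < μ) (hw_pos : ∀ t, 0 < t → 0 < w t) {t : ℝ} (ht : t ∈ Ioc 0 η) :
    μ ≤ GP w μ η t := by
  have : 0 ≤ ∫ s in t..η, (FP w μ η s)⁻¹ := intervalIntegral.integral_nonneg ht.2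
    fun s hs => (inv_pos.2 (FP_pos hμ hw_pos ⟨ht.1.trans_le hs.1, hs.2⟩)).le
  unfold GP
  linarith

lemma hasDerivAt_fP (hw_pos : ∀ t, 0 < t → 0 < w t) (hw : ContinuousOn w (Ioi 0)) (hη : 0 < η)
    {t : ℝ} (ht : 0 < t) : HasDerivAt (fP w μ η) (-(w t)⁻¹) t := by
  have hg : ContinuousOn (fun s => (w s)⁻¹) (Ioi 0) := hw.inv₀ fun s hs => (hw_pos s hs).ne'
  refine (intervalIntegral.integral_hasDerivAt_left ?_
    (hg.stronglyMeasurableAtFilter isOpen_Ioi t ht)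
    (hg.continuousAt (Ioi_mem_nhds ht))).const_add μ
  exact ContinuousOn.intervalIntegrable
    (hg.mono fun s hs => (lt_min ht hη).trans_le hs.1)

lemma continuousOn_fP (hw_pos : ∀ t, 0 < t → 0 < w t) (hw : ContinuousOn w (Ioi 0))
    (hη : 0 < η) : ContinuousOn (fP w μ η) (Ioi 0) :=
  fun _ ht => (hasDerivAt_fP hw_pos hw hη ht).continuousAt.continuousWithinAt

lemma hasDerivAt_GP (hμ : 0 < μ) (hw_pos : ∀ t, 0 < t → 0 < w t) (hw : ContinuousOn w (Ioi 0))
    {t : ℝ} (ht : t ∈ Ioc 0 η) : HasDerivAt (GP w μ η) (-(FP w μ η t)⁻¹) t := by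
  have hf := continuousOn_fP (μ := μ) hw_pos hw (ht.1.trans_le ht.2)
  refine hasDerivAt_const_add_integral_left (hf.isOpen_inter_preimage isOpen_Ioi isOpen_Ioi)
    (g := fun s => (FP w μ η s)⁻¹) (S := Ioi 0 ∩ fP w μ η ⁻¹' Ioi 0) ?_ ht.2 ?_
  · exact ((hw.mul hf).mono inter_subset_left).inv₀
      fun s hs => (mul_pos (hw_pos s hs.1) hs.2).ne'
  · intro s hs
    have hs0 : 0 < s := ht.1.trans_le hs.1
    exact ⟨hs0, hμ.trans_le (le_fP hw_pos ⟨hs0, hs.2⟩)⟩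

end weights

/-- Second order Taylor bound for a power on `[v, v + 1]`. -/
lemma exists_rpow_add_le {v : ℝ} (hv : 0 < v) (q : ℝ) :
    ∃ M, 0 < M ∧ ∀ s ∈ Icc (0 : ℝ) 1, (v + s) ^ q ≤ v ^ q + q * v ^ (q - 1) * s + M * s ^ 2 := by
  have hv1 : v < v + 1 := by linarith
  have hcd : ContDiffOn ℝ ((1 : ℕ) + 1) (fun x : ℝ => x ^ q) (Icc v (v + 1)) := fun x hx =>
    (Real.contDiffAt_rpow_const_of_ne (hv.trans_le hx.1).ne').contDiffWithinAt
  obtain ⟨M, hM⟩ := exists_taylor_mean_remainder_bound hv1.le hcd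
  refine ⟨max M 1, by positivity, fun s hs => ?_⟩
  have h := hM (v + s) ⟨by linarith [hs.1], by linarith [hs.2]⟩
  have hd : derivWithin (fun x : ℝ => x ^ q) (Icc v (v + 1)) v = q * v ^ (q - 1) :=
    (Real.hasDerivAt_rpow_const (Or.inl hv.ne')).hasDerivWithinAt.derivWithin
      (uniqueDiffOn_Icc hv1 v (left_mem_Icc.2 hv1.le))
  rw [taylorWithinEval_succ, taylor_within_zero_eval, iteratedDerivWithin_one, hd] at h
  have h' := (le_abs_self _).trans h
  norm_num at h'
  nlinarith [mul_le_mul_of_nonneg_right (le_max_left M 1) (sq_nonneg s)]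

/-- The value of `(p - 1) (v - v ^ q)` at its critical point is the Hardy constant, and the
function is bounded below by a quadratic to the right of it. -/
lemma exists_le_sub_rpow {p : ℝ} (hp : 1 < p) :
    ∃ M, 0 < M ∧ ∀ s ∈ Icc (0 : ℝ) 1, (1 - 1 / p) ^ p - M * s ^ 2 ≤
      (p - 1) * ((1 - 1 / p) ^ (p - 1) + s) -
        (p - 1) * ((1 - 1 / p) ^ (p - 1) + s) ^ (p / (p - 1)) := by
  have hp0 : 0 < p := by linarith
  have hp1 : 0 < p - 1 := by linarith
  set k : ℝ := 1 - 1 / p with hk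
  have hkp : k = (p - 1) / p := by rw [hk]; field_simp
  have hk0 : 0 < k := by rw [hkp]; positivity
  obtain ⟨M, hM0, hM⟩ := exists_rpow_add_le (Real.rpow_pos_of_pos hk0 (p - 1)) (p / (p - 1))
  refine ⟨(p - 1) * M, by positivity, fun s hs => ?_⟩
  have h := hM s hs
  have e1 : (k ^ (p - 1)) ^ (p / (p - 1)) = k ^ p := by
    rw [← Real.rpow_mul hk0.le]; congr 1; field_simp
  have e2 : (k ^ (p - 1)) ^ (p / (p - 1) - 1) = k := by
    rw [← Real.rpow_mul hk0.le]
    have : (p - 1) * (p / (p - 1) - 1) = 1 := by field_simp; ring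
    rw [this, Real.rpow_one]
  have e3 : p / (p - 1) * k = 1 := by rw [hkp]; field_simp
  have e4 : k ^ p = k ^ (p - 1) * k := by
    rw [← Real.rpow_add_one hk0.ne']; congr 1; ring
  have e5 : p * k = p - 1 := by rw [hkp]; field_simp
  rw [e1, e2, e3] at h
  have h2 := mul_le_mul_of_nonneg_left h hp1.le
  have e6 : (p - 1) * k ^ (p - 1) = p * k ^ p := by rw [e4, ← e5]; ring
  linarith

/-- Young's inequality in the form used for weighted Hardy inequalities. -/
lemma young_weighted {p a b ω f v : ℝ} (hp : 1 < p) (ha : 0 ≤ a) (hb : 0 ≤ b) (hω : 0 < ω)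
    (hf : 0 < f) (hv : 0 ≤ v) :
    p * (a * b ^ (p - 1) * v * f ^ (1 - p)) ≤
      a ^ p * ω ^ (p - 1) + (p - 1) * (b ^ p * v ^ (p / (p - 1)) / (ω * f ^ p)) := by
  have hp0 : 0 < p := by linarith
  have hp1 : 0 < p - 1 := by linarith
  have hpq : p.HolderConjugate (p / (p - 1)) := Real.HolderConjugate.conjExponent hp
  have h := Real.young_inequality_of_nonneg (a := a * ω ^ ((p - 1) / p))
    (b := b ^ (p - 1) * v * f ^ (1 - p) * ω ^ (-((p - 1) / p))) (by positivity) (by positivity) hpq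
  have e1 : a * ω ^ ((p - 1) / p) * (b ^ (p - 1) * v * f ^ (1 - p) * ω ^ (-((p - 1) / p)))
      = a * b ^ (p - 1) * v * f ^ (1 - p) := by
    rw [Real.rpow_neg hω.le]
    have := (Real.rpow_pos_of_pos hω ((p - 1) / p)).ne'
    field_simp
  have e2 : (a * ω ^ ((p - 1) / p)) ^ p = a ^ p * ω ^ (p - 1) := by
    rw [Real.mul_rpow ha (by positivity), ← Real.rpow_mul hω.le]
    congr 2; field_simp
  have e3 : (b ^ (p - 1) * v * f ^ (1 - p) * ω ^ (-((p - 1) / p))) ^ (p / (p - 1))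
      = b ^ p * v ^ (p / (p - 1)) / (ω * f ^ p) := by
    rw [Real.mul_rpow (by positivity) (by positivity),
      Real.mul_rpow (by positivity) (by positivity), Real.mul_rpow (by positivity) hv,
      ← Real.rpow_mul hb, ← Real.rpow_mul hf.le, ← Real.rpow_mul hω.le]
    have i1 : (p - 1) * (p / (p - 1)) = p := by field_simp
    have i2 : (1 - p) * (p / (p - 1)) = -p := by
      rw [show 1 - p = -(p - 1) by ring, neg_mul, i1]
    have i3 : -((p - 1) / p) * (p / (p - 1)) = -1 := by field_simp
    rw [i1, i2, i3, Real.rpow_neg hf.le, Real.rpow_neg_one]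
    field_simp
  rw [e1, e2, e3] at h
  have h2 := mul_le_mul_of_nonneg_left h hp0.le
  refine h2.trans (le_of_eq ?_)
  field_simp

/-- The integrand of the Hardy inequality with remainder dominates the derivative of
`-v f ^ (1 - p) |u| ^ p`, where `v' = c / (ω f g ^ 2)` and `f' = -1 / ω`. -/
lemma deriv_potential_le {p Λ C c x y ω f g v : ℝ} (hp : 1 < p) (hω : 0 < ω) (hf : 0 < f)
    (hv : 0 ≤ v)
    (hΛ : Λ + C / g ^ 2 ≤ c / g ^ 2 + (p - 1) * v - (p - 1) * v ^ (p / (p - 1))) :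
    -((c / (ω * f * g ^ 2) * f ^ (1 - p) + v * (-ω⁻¹ * (1 - p) * f ^ (1 - p - 1))) * |x| ^ p +
        v * f ^ (1 - p) * (p * |x| ^ (p - 2) * x * y)) ≤
      |y| ^ p * ω ^ (p - 1) -
        (Λ * (|x| ^ p * ω ^ (p - 1) / (ω * f) ^ p) +
          C * (|x| ^ p * ω ^ (p - 1) / ((ω * f) ^ p * g ^ 2))) := by
  have hY := young_weighted (a := |y|) (b := |x|) hp (abs_nonneg y) (abs_nonneg x) hω hf hv
  have hfp := Real.rpow_pos_of_pos hf p
  have hωp := Real.rpow_pos_of_pos hω p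
  have e1 : f ^ (1 - p) = f / f ^ p := by rw [Real.rpow_sub hf, Real.rpow_one]
  have e2 : f ^ (1 - p - 1) = (f ^ p)⁻¹ := by
    rw [← Real.rpow_neg hf.le]; congr 1; ring
  have e3 : ω ^ (p - 1) / (ω * f) ^ p = 1 / (ω * f ^ p) := by
    rw [Real.mul_rpow hω.le hf.le, Real.rpow_sub hω, Real.rpow_one]; field_simp
  have hx : |x| ^ (p - 2) * |x| = |x| ^ (p - 1) := by
    rcases eq_or_ne x 0 with rfl | h0
    · simp [Real.zero_rpow (sub_pos.2 hp).ne']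
    · rw [← Real.rpow_add_one (abs_pos.2 h0).ne']; congr 1; ring
  have hxy : -(|x| ^ (p - 2) * (x * y)) ≤ |y| * |x| ^ (p - 1) := by
    rw [← hx]
    have : -(x * y) ≤ |x| * |y| := by rw [← abs_mul]; exact neg_le_abs _
    nlinarith [mul_le_mul_of_nonneg_left this (Real.rpow_nonneg (abs_nonneg x) (p - 2))]
  have hmul := mul_le_mul_of_nonneg_left hxy
    (show 0 ≤ p * (v * f ^ (1 - p)) by
      have := Real.rpow_nonneg hf.le (1 - p)
      have : 0 < p := by linarith
      positivity)
  have hB := mul_le_mul_of_nonneg_left hΛ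
    (show 0 ≤ |x| ^ p / (ω * f ^ p) by positivity)
  have r1 : |x| ^ p * ω ^ (p - 1) / (ω * f) ^ p = |x| ^ p / (ω * f ^ p) := by
    rw [mul_div_assoc, e3]; ring
  have r2 : |x| ^ p * ω ^ (p - 1) / ((ω * f) ^ p * g ^ 2) = |x| ^ p / (ω * f ^ p) / g ^ 2 := by
    rw [← div_div, r1]
  have r3 : c / (ω * f * g ^ 2) * f ^ (1 - p) = c / g ^ 2 / (ω * f ^ p) := by
    rw [e1]
    rcases eq_or_ne g 0 with rfl | hg
    · simp
    · field_simp
  have r4 : v * (-ω⁻¹ * (1 - p) * f ^ (1 - p - 1)) = (p - 1) * v / (ω * f ^ p) := by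
    rw [e2]; field_simp; ring
  rw [r1, r2, r3, r4]
  have t1 : |x| ^ p / (ω * f ^ p) * (Λ + C / g ^ 2) =
      Λ * (|x| ^ p / (ω * f ^ p)) + C * (|x| ^ p / (ω * f ^ p) / g ^ 2) := by ring
  have t2 : |x| ^ p / (ω * f ^ p) *
        (c / g ^ 2 + (p - 1) * v - (p - 1) * v ^ (p / (p - 1))) =
      (c / g ^ 2 / (ω * f ^ p) + (p - 1) * v / (ω * f ^ p)) * |x| ^ p -
        (p - 1) * (|x| ^ p * v ^ (p / (p - 1)) / (ω * f ^ p)) := by ring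
  rw [t1, t2] at hB
  linarith

/-- A within-derivative of a function vanishing on `(-∞, a]` vanishes on `(0, a]`. -/
lemma eq_zero_of_hasDerivWithinAt_Ioc {u u' : ℝ → ℝ} {a η : ℝ} (haη : a ≤ η)
    (hu : ∀ t ∈ Ioc (0 : ℝ) η, HasDerivWithinAt u (u' t) (Ioc (0 : ℝ) η) t)
    (hz : ∀ t ≤ a, u t = 0) {t : ℝ} (ht : t ∈ Ioc 0 a) : u' t = 0 := by
  have h1 := (hu t ⟨ht.1, ht.2.trans haη⟩).mono (Ioc_subset_Ioc_right haη)
  have h2 : HasDerivWithinAt u 0 (Ioc 0 a) t :=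
    (hasDerivWithinAt_const t (Ioc 0 a) (0 : ℝ)).congr (fun s hs => hz s hs.2) (hz t ht.2)
  exact (uniqueDiffOn_Ioc 0 a t ht).eq_deriv _ h1 h2

lemma integral_eq_of_eq_zero_on_Ioc {g : ℝ → ℝ} {a η : ℝ} (ha : 0 < a) (haη : a ≤ η)
    (hg : ContinuousOn g (Icc a η)) (hz : ∀ t ∈ Ioc 0 a, g t = 0) :
    ∫ t in (0 : ℝ)..η, g t = ∫ t in a..η, g t := by
  have hz' : EqOn g 0 (Ioc 0 a) := hz
  have h0 : IntervalIntegrable g volume 0 a := by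
    rw [intervalIntegrable_iff_integrableOn_Ioc_of_le ha.le,
      integrableOn_congr_fun hz' measurableSet_Ioc]
    exact integrableOn_zero
  rw [← intervalIntegral.integral_add_adjacent_intervals h0
    (hg.intervalIntegrable_of_Icc haη)]
  have : ∫ t in (0 : ℝ)..a, g t = 0 := by
    rw [intervalIntegral.integral_of_le ha.le, setIntegral_congr_fun measurableSet_Ioc hz']
    simp
  rw [this, zero_add]

/-- Weighted Hardy inequality with sharp remainder for `w ∈ P(ℝ₊)`:
there are positive constants `C, L` (independent of `u`) such that the Hardy
inequality holds with the extra remainder term `C ∫ |u|^p W_p/(F_η^p G_η^2)`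
and the boundary term `- L |u(η)|^p`. -/
theorem hardy_P_remainder (p μ η : ℝ) (hp : 1 < p) (hμ : 0 < μ) (hη : 0 < η)
    (w : ℝ → ℝ)
    (hw_pos : ∀ t, 0 < t → 0 < w t)
    (hw_smooth : ContDiffOn ℝ 1 w (Set.Ioi 0))
    (hw_lim : ∃ a : ENNReal, Filter.Tendsto (fun t => ENNReal.ofReal (w t))
        (nhdsWithin (0:ℝ) (Set.Ioi 0)) (nhds a))
    (hwP : ∀ b, 0 < b → ¬ MeasureTheory.IntegrableOn (fun s => (w s)⁻¹) (Set.Ioo 0 b)) :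
    ∃ C L : ℝ, 0 < C ∧ 0 < L ∧
      ∀ u u' : ℝ → ℝ,
        (∀ t ∈ Set.Ioc (0:ℝ) η, HasDerivWithinAt u (u' t) (Set.Ioc (0:ℝ) η) t) →
        ContinuousOn u' (Set.Ioc (0:ℝ) η) →
        (∃ a, 0 < a ∧ ∀ t ≤ a, u t = 0) →
        (∫ t in (0:ℝ)..η, |u' t| ^ p * Wp w p t)
        ≥ (1 - 1 / p) ^ p *
            (∫ t in (0:ℝ)..η, |u t| ^ p * Wp w p t / FP w μ η t ^ p)
          + C * (∫ t in (0:ℝ)..η, |u t| ^ p * Wp w p t / (FP w μ η t ^ p * GP w μ η t ^ 2))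
          - L * |u η| ^ p := by
  have hp0 : 0 < p := by linarith
  have hw : ContinuousOn w (Ioi 0) := hw_smooth.continuousOn
  obtain ⟨M, hM0, hM⟩ := exists_le_sub_rpow hp
  set v₀ : ℝ := (1 - 1 / p) ^ (p - 1)
  have hv₀ : 0 < v₀ := Real.rpow_pos_of_pos (by rw [sub_pos, div_lt_one hp0]; exact hp) _
  obtain ⟨c, hc0, hcμ, hcM⟩ : ∃ c : ℝ, 0 < c ∧ c ≤ μ ∧ M * c ≤ 1 / 2 :=
    ⟨min μ (1 / (2 * M)), by positivity, min_le_left _ _, by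
      refine (mul_le_mul_of_nonneg_left (min_le_right _ _) hM0.le).trans (le_of_eq ?_)
      field_simp⟩
  have hf0 : ∀ t ∈ Ioc 0 η, 0 < fP w μ η t := fun t ht => hμ.trans_le (le_fP hw_pos ht)
  have hG0 : ∀ t ∈ Ioc 0 η, 0 < GP w μ η t := fun t ht => hμ.trans_le (le_GP hμ hw_pos ht)
  have hv0 : ∀ t ∈ Ioc 0 η, 0 < v₀ + c / GP w μ η t := fun t ht =>
    add_pos hv₀ (div_pos hc0 (hG0 t ht))
  have hηmem : η ∈ Ioc 0 η := ⟨hη, le_rfl⟩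
  refine ⟨c / 2, (v₀ + c / GP w μ η η) * fP w μ η η ^ (1 - p), by positivity,
    mul_pos (hv0 η hηmem) (Real.rpow_pos_of_pos (hf0 η hηmem) _), ?_⟩
  rintro u u' hu hu' ⟨a₀, ha₀, hz₀⟩
  obtain ⟨a, ha, haη, hz⟩ : ∃ a, 0 < a ∧ a ≤ η ∧ ∀ t ≤ a, u t = 0 :=
    ⟨min a₀ η, lt_min ha₀ hη, min_le_right _ _, fun t ht => hz₀ t (ht.trans (min_le_left _ _))⟩
  have hsub : Icc a η ⊆ Ioc 0 η := fun t ht => ⟨ha.trans_le ht.1, ht.2⟩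
  have hucont : ContinuousOn u (Icc a η) := fun t ht =>
    ((hu t (hsub ht)).continuousWithinAt).mono hsub
  have hu'cont : ContinuousOn u' (Icc a η) := hu'.mono hsub
  have hwcont : ContinuousOn w (Icc a η) := hw.mono fun t ht => (hsub ht).1
  have hfcont : ContinuousOn (fP w μ η) (Icc a η) :=
    (continuousOn_fP hw_pos hw hη).mono fun t ht => (hsub ht).1
  have hFcont : ContinuousOn (FP w μ η) (Icc a η) := hwcont.mul hfcont
  have hGcont : ContinuousOn (GP w μ η) (Icc a η) := fun t ht =>
    (hasDerivAt_GP hμ hw_pos hw (hsub ht)).continuousAt.continuousWithinAt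
  have hWcont : ContinuousOn (Wp w p) (Icc a η) :=
    hwcont.rpow_const fun t ht => Or.inl (hw_pos t (hsub ht).1).ne'
  have hFpcont : ContinuousOn (fun t => FP w μ η t ^ p) (Icc a η) :=
    hFcont.rpow_const fun t _ => Or.inr hp0.le
  have hFp0 : ∀ t ∈ Icc a η, FP w μ η t ^ p ≠ 0 := fun t ht =>
    (Real.rpow_pos_of_pos (FP_pos hμ hw_pos (hsub ht)) p).ne'
  have hupcont : ContinuousOn (fun t => |u t| ^ p) (Icc a η) :=
    hucont.abs.rpow_const fun t _ => Or.inr hp0.le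
  have hA : ContinuousOn (fun t => |u' t| ^ p * Wp w p t) (Icc a η) :=
    (hu'cont.abs.rpow_const fun t _ => Or.inr hp0.le).mul hWcont
  have hB : ContinuousOn (fun t => |u t| ^ p * Wp w p t / FP w μ η t ^ p) (Icc a η) :=
    (hupcont.mul hWcont).div hFpcont hFp0
  have hD : ContinuousOn
      (fun t => |u t| ^ p * Wp w p t / (FP w μ η t ^ p * GP w μ η t ^ 2)) (Icc a η) :=
    (hupcont.mul hWcont).div (hFpcont.mul (hGcont.pow 2))
      fun t ht => mul_ne_zero (hFp0 t ht) (pow_ne_zero 2 (hG0 t (hsub ht)).ne')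
  have hup0 : ∀ t ∈ Ioc 0 a, |u t| ^ p = 0 := fun t ht => by
    rw [hz t ht.2, abs_zero, Real.zero_rpow hp0.ne']
  rw [integral_eq_of_eq_zero_on_Ioc ha haη hA fun t ht => by
      rw [eq_zero_of_hasDerivWithinAt_Ioc haη hu hz ht, abs_zero, Real.zero_rpow hp0.ne', zero_mul],
    integral_eq_of_eq_zero_on_Ioc ha haη hB fun t ht => by simp [hup0 t ht],
    integral_eq_of_eq_zero_on_Ioc ha haη hD fun t ht => by simp [hup0 t ht]]
  have key := intervalIntegral.sub_le_integral_of_hasDeriv_right_of_le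
    (g := fun t => -((v₀ + c / GP w μ η t) * fP w μ η t ^ (1 - p) * |u t| ^ p))
    (g' := fun t => -((c / (w t * fP w μ η t * GP w μ η t ^ 2) * fP w μ η t ^ (1 - p) +
        (v₀ + c / GP w μ η t) * (-(w t)⁻¹ * (1 - p) * fP w μ η t ^ (1 - p - 1))) * |u t| ^ p +
        (v₀ + c / GP w μ η t) * fP w μ η t ^ (1 - p) * (p * |u t| ^ (p - 2) * u t * u' t)))
    (φ := fun t => |u' t| ^ p * Wp w p t - ((1 - 1 / p) ^ p *
        (|u t| ^ p * Wp w p t / FP w μ η t ^ p) +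
        c / 2 * (|u t| ^ p * Wp w p t / (FP w μ η t ^ p * GP w μ η t ^ 2))))
    haη ?_ ?_ ?_ ?_
  · have hBi := (hB.intervalIntegrable_of_Icc (μ := volume) haη).const_mul ((1 - 1 / p) ^ p)
    have hDi := (hD.intervalIntegrable_of_Icc (μ := volume) haη).const_mul (c / 2)
    rw [intervalIntegral.integral_sub (hA.intervalIntegrable_of_Icc haη) (hBi.add hDi),
      intervalIntegral.integral_add hBi hDi, intervalIntegral.integral_const_mul,
      intervalIntegral.integral_const_mul, hup0 a ⟨ha, le_rfl⟩] at key
    linarith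
  · refine (ContinuousOn.mul (ContinuousOn.mul (continuousOn_const.add
      (continuousOn_const.div hGcont fun t ht => (hG0 t (hsub ht)).ne')) ?_) hupcont).neg
    exact hfcont.rpow_const fun t ht => Or.inl (hf0 t (hsub ht)).ne'
  · intro t ht
    have htm : t ∈ Ioc 0 η := hsub (Ioo_subset_Icc_self ht)
    have hwt := (hw_pos t htm.1).ne'
    have hft := (hf0 t htm).ne'
    have hGt := (hG0 t htm).ne'
    have hdu : HasDerivAt u (u' t) t := (hu t htm).hasDerivAt (Ioc_mem_nhds htm.1 ht.2)
    have hdup : HasDerivAt (fun s => |u s| ^ p) (p * |u t| ^ (p - 2) * u t * u' t) t :=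
      (hasDerivAt_abs_rpow (u t) hp).comp t hdu
    have hdf : HasDerivAt (fun s => fP w μ η s ^ (1 - p))
        (-(w t)⁻¹ * (1 - p) * fP w μ η t ^ (1 - p - 1)) t :=
      (hasDerivAt_fP hw_pos hw hη htm.1).rpow_const (Or.inl hft)
    have hdv : HasDerivAt (fun s => v₀ + c / GP w μ η s)
        (c / (w t * fP w μ η t * GP w μ η t ^ 2)) t := by
      have h := (((hasDerivAt_GP hμ hw_pos hw htm).fun_inv hGt).const_mul c).const_add v₀
      simp only [← div_eq_mul_inv] at h
      refine h.congr_deriv ?_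
      unfold FP
      field_simp
    exact ((hdv.mul hdf).mul hdup).neg.hasDerivWithinAt
  · exact (hA.sub ((continuousOn_const.mul hB).add (continuousOn_const.mul hD))).integrableOn_Icc
  · intro t ht
    have htm : t ∈ Ioc 0 η := hsub (Ioo_subset_Icc_self ht)
    have hGt := hG0 t htm
    have hs : c / GP w μ η t ∈ Icc (0 : ℝ) 1 :=
      ⟨by positivity, (div_le_one hGt).2 (hcμ.trans (le_GP hμ hw_pos htm))⟩
    refine deriv_potential_le hp (hw_pos t htm.1) (hf0 t htm) (hv0 t htm).le ?_
    have h1 := hM _ hs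
    have h2 : M * (c / GP w μ η t) ^ 2 ≤ c / 2 / GP w μ η t ^ 2 := by
      rw [div_pow, ← mul_div_assoc]
      gcongr
      nlinarith
    have h3 : c / GP w μ η t ^ 2 = c / 2 / GP w μ η t ^ 2 + c / 2 / GP w μ η t ^ 2 := by ring
    linarith
end

section
/- Let 1<p<∞, μ>0, η>0 and w ∈ Q(ℝ₊). Then there exist positive numbers C and L (depending only on w, p, η, μ, not on u) such that for every u ∈ C_c^1((0,η]): ∫_0^η |u'(t)|^p W_p(t) dt ≥ Λ_p ∫_0^η |u(t)|^p W_p(t) / F_η(t)^p dt + C ∫_0^η |u(t)|^p W_p(t) / ( F_η(t)^p G_η(t)^2 ) dt + L |u(η)|^p. -/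
open MeasureTheory Set

/-- `f_η(t) = ∫_0^t w(s)⁻¹ ds`  (case `w ∈ Q(ℝ₊)`). -/
noncomputable def fQ (w : ℝ → ℝ) (t : ℝ) : ℝ := ∫ s in (0:ℝ)..t, (w s)⁻¹

/-- `F_η(t) = w(t) f_η(t)`. -/
noncomputable def FQ (w : ℝ → ℝ) (t : ℝ) : ℝ := w t * fQ w t

/-- `G_η(t) = μ + ∫_t^η F_η(s)⁻¹ ds`. -/
noncomputable def GQ (w : ℝ → ℝ) (μ η t : ℝ) : ℝ := μ + ∫ s in t..η, (FQ w s)⁻¹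

/-- A second-order upper bound for `s ↦ (1 - s) ^ q` at `s = 0`. -/
theorem one_sub_rpow_le {q s : ℝ} (hq : 1 < q) (hs : 0 ≤ s) (hs1 : s < 1) :
    (1 - s) ^ q ≤ 1 - q * s + q ^ 2 * s ^ 2 := by
  have hx : 0 < 1 - s := by linarith
  have hlin : 1 - q * s ≤ (1 - s) ^ (q - 1) := by
    rcases le_total 2 q with h | h
    · have := one_add_mul_self_le_rpow_one_add (s := -s) (by linarith) (p := q - 1) (by linarith)
      rw [← sub_eq_add_neg] at this
      nlinarith
    · have := Real.rpow_le_rpow_of_exponent_ge hx (by linarith) (show q - 1 ≤ 1 by linarith)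
      rw [Real.rpow_one] at this
      nlinarith
  have htan : (1 - s) ^ q + q * (1 - s) ^ (q - 1) * s ≤ 1 := by
    have hb := one_add_mul_self_le_rpow_one_add (s := s / (1 - s))
      (by have : 0 ≤ s / (1 - s) := by positivity
          linarith) (p := q) hq.le
    have h1 : 1 + s / (1 - s) = (1 - s)⁻¹ := by field_simp; ring
    rw [h1, Real.inv_rpow hx.le] at hb
    have hpos : 0 < (1 - s) ^ q := Real.rpow_pos_of_pos hx q
    have h2 := mul_le_mul_of_nonneg_left hb hpos.le
    rw [mul_inv_cancel₀ hpos.ne'] at h2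
    rw [Real.rpow_sub_one hx.ne']
    calc _ = (1 - s) ^ q * (1 + q * (s / (1 - s))) := by field_simp
      _ ≤ 1 := h2
  have h3 : q * s * (1 - q * s) ≤ q * s * (1 - s) ^ (q - 1) :=
    mul_le_mul_of_nonneg_left hlin (by positivity)
  nlinarith

/-- The Riccati-type expression `(p - 1) (B - B ^ p')` near its maximum `(1 - 1 / p) ^ p`. -/
theorem riccati_lower_bound {p s : ℝ} (hp : 1 < p) (hs : 0 ≤ s) (hs1 : s < 1) :
    (1 - 1 / p) ^ p - p * (1 - 1 / p) ^ (p - 1) * s ^ 2 ≤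
      (p - 1) * ((1 - 1 / p) ^ (p - 1) * (1 - s)
        - ((1 - 1 / p) ^ (p - 1) * (1 - s)) ^ (p / (p - 1))) := by
  have hp0 : 0 < p - 1 := by linarith
  have hp1 : 0 < p := by linarith
  have hk : 0 < 1 - 1 / p := by
    rw [one_sub_div hp1.ne']; positivity
  have hq : 1 < p / (p - 1) := by rw [lt_div_iff₀ hp0]; linarith
  have hbound := one_sub_rpow_le hq hs hs1
  have hB : ((1 - 1 / p) ^ (p - 1) * (1 - s)) ^ (p / (p - 1))
      = (1 - 1 / p) ^ (p - 1) * ((1 - 1 / p) * (1 - s) ^ (p / (p - 1))) := by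
    rw [Real.mul_rpow (by positivity) (by linarith), ← Real.rpow_mul hk.le,
      mul_div_cancel₀ p hp0.ne', ← mul_assoc, ← Real.rpow_add_one hk.ne']
    simp
  have hkp : (1 - 1 / p) ^ p = (1 - 1 / p) ^ (p - 1) * (1 - 1 / p) := by
    rw [← Real.rpow_add_one hk.ne']; simp
  have hB0 : 0 < (1 - 1 / p) ^ (p - 1) := by positivity
  rw [hB, hkp]
  generalize (1 - 1 / p) ^ (p - 1) = b at hB0
  have h1 : (1 - 1 / p) * (1 - s) ^ (p / (p - 1)) ≤ (1 - 1 / p) - s + p / (p - 1) * s ^ 2 := by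
    refine (mul_le_mul_of_nonneg_left hbound hk.le).trans_eq ?_
    field_simp
  have h2 : (p - 1) * b * ((1 - s) - ((1 - 1 / p) - s + p / (p - 1) * s ^ 2)) ≤
      (p - 1) * b * ((1 - s) - (1 - 1 / p) * (1 - s) ^ (p / (p - 1))) :=
    mul_le_mul_of_nonneg_left (by linarith) (by positivity)
  refine le_trans (le_of_eq ?_) (h2.trans_eq (by ring))
  field_simp
  ring

/-- Weighted Young inequality in the form used against the derivative of `|u| ^ p * H`. -/
theorem weighted_young {p x v a f B : ℝ} (hp : 1 < p) (ha : 0 < a) (hf : 0 < f) (hB : 0 ≤ B) :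
    p * |x| ^ (p - 2) * x * v * (f ^ (1 - p) * B) ≤
      |v| ^ p * a ^ (p - 1) + (p - 1) * (|x| ^ p * (a⁻¹ * f ^ (-p)) * B ^ (p / (p - 1))) := by
  have hp0 : 0 < p - 1 := by linarith
  have hp1 : 0 < p := by linarith
  have hpq : p.HolderConjugate (p / (p - 1)) := Real.HolderConjugate.conjExponent hp
  have hxp : |x| ^ (p - 2) * x * v ≤ |x| ^ (p - 1) * |v| := by
    rcases eq_or_ne x 0 with rfl | hx
    · simp only [mul_zero, zero_mul]; positivity
    · have h : |x| ^ (p - 1) = |x| ^ (p - 2) * |x| := by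
        rw [← Real.rpow_add_one (abs_pos.2 hx).ne']; congr 1; ring
      rw [h, mul_assoc, mul_assoc, ← abs_mul]
      exact mul_le_mul_of_nonneg_left (le_abs_self _) (by positivity)
  have hy := Real.young_inequality_of_nonneg
    (a := |v| * a ^ ((p - 1) / p)) (b := |x| ^ (p - 1) * f ^ (1 - p) * B * a ^ (-((p - 1) / p)))
    (by positivity) (by positivity) hpq
  have e1 : (|v| * a ^ ((p - 1) / p)) ^ p = |v| ^ p * a ^ (p - 1) := by
    rw [Real.mul_rpow (by positivity) (by positivity), ← Real.rpow_mul ha.le,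
      div_mul_cancel₀ _ hp1.ne']
  have e2 : (|x| ^ (p - 1) * f ^ (1 - p) * B * a ^ (-((p - 1) / p))) ^ (p / (p - 1))
      = |x| ^ p * (a⁻¹ * f ^ (-p)) * B ^ (p / (p - 1)) := by
    rw [Real.mul_rpow (by positivity) (by positivity), Real.mul_rpow (by positivity) hB,
      Real.mul_rpow (by positivity) (by positivity), ← Real.rpow_mul ha.le, ← Real.rpow_mul hf.le,
      ← Real.rpow_mul (abs_nonneg x), ← Real.rpow_neg_one a]
    have i1 : (p - 1) * (p / (p - 1)) = p := by field_simp
    have i2 : (1 - p) * (p / (p - 1)) = -p := by field_simp; ring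
    have i3 : -((p - 1) / p) * (p / (p - 1)) = -1 := by field_simp
    rw [i1, i2, i3]; ring
  have e3 : |v| * a ^ ((p - 1) / p) * (|x| ^ (p - 1) * f ^ (1 - p) * B * a ^ (-((p - 1) / p)))
      = |x| ^ (p - 1) * |v| * (f ^ (1 - p) * B) := by
    have : a ^ ((p - 1) / p) * a ^ (-((p - 1) / p)) = 1 := by
      rw [← Real.rpow_add ha]; simp
    linear_combination |v| * (|x| ^ (p - 1) * f ^ (1 - p) * B) * this
  rw [e1, e2, e3] at hy
  calc _ = p * ((|x| ^ (p - 2) * x * v) * (f ^ (1 - p) * B)) := by ring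
    _ ≤ p * (|x| ^ (p - 1) * |v| * (f ^ (1 - p) * B)) := by gcongr
    _ ≤ _ := mul_le_mul_of_nonneg_left hy hp1.le
    _ = _ := by field_simp

section Weight

variable {w : ℝ → ℝ}

theorem continuousOn_inv_weight (hw_pos : ∀ t, 0 < t → 0 < w t) (hw : ContinuousOn w (Ioi 0)) :
    ContinuousOn (fun s => (w s)⁻¹) (Ioi 0) :=
  hw.inv₀ fun t ht => (hw_pos t ht).ne'

theorem intervalIntegrable_inv_weight
    (hwQ : ∀ b, 0 < b → IntegrableOn (fun s => (w s)⁻¹) (Ioo 0 b)) {t : ℝ} (ht : 0 < t) :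
    IntervalIntegrable (fun s => (w s)⁻¹) volume 0 t := by
  rw [intervalIntegrable_iff_integrableOn_Ioo_of_le ht.le]
  exact hwQ t ht

theorem fQ_pos (hw_pos : ∀ t, 0 < t → 0 < w t)
    (hwQ : ∀ b, 0 < b → IntegrableOn (fun s => (w s)⁻¹) (Ioo 0 b)) {t : ℝ} (ht : 0 < t) :
    0 < fQ w t :=
  intervalIntegral.intervalIntegral_pos_of_pos_on (intervalIntegrable_inv_weight hwQ ht)
    (fun s hs => inv_pos.2 (hw_pos s hs.1)) ht

theorem hasDerivAt_fQ (hw_pos : ∀ t, 0 < t → 0 < w t) (hw : ContinuousOn w (Ioi 0))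
    (hwQ : ∀ b, 0 < b → IntegrableOn (fun s => (w s)⁻¹) (Ioo 0 b)) {t : ℝ} (ht : 0 < t) :
    HasDerivAt (fQ w) (w t)⁻¹ t :=
  intervalIntegral.integral_hasDerivAt_right (intervalIntegrable_inv_weight hwQ ht)
    ((continuousOn_inv_weight hw_pos hw).stronglyMeasurableAtFilter isOpen_Ioi t ht)
    ((continuousOn_inv_weight hw_pos hw).continuousAt (Ioi_mem_nhds ht))

theorem continuousOn_fQ (hw_pos : ∀ t, 0 < t → 0 < w t) (hw : ContinuousOn w (Ioi 0))
    (hwQ : ∀ b, 0 < b → IntegrableOn (fun s => (w s)⁻¹) (Ioo 0 b)) :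
    ContinuousOn (fQ w) (Ioi 0) := fun _ ht =>
  (hasDerivAt_fQ hw_pos hw hwQ ht).continuousAt.continuousWithinAt

theorem FQ_pos (hw_pos : ∀ t, 0 < t → 0 < w t)
    (hwQ : ∀ b, 0 < b → IntegrableOn (fun s => (w s)⁻¹) (Ioo 0 b)) {t : ℝ} (ht : 0 < t) :
    0 < FQ w t :=
  mul_pos (hw_pos t ht) (fQ_pos hw_pos hwQ ht)

theorem continuousOn_inv_FQ (hw_pos : ∀ t, 0 < t → 0 < w t) (hw : ContinuousOn w (Ioi 0))
    (hwQ : ∀ b, 0 < b → IntegrableOn (fun s => (w s)⁻¹) (Ioo 0 b)) :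
    ContinuousOn (fun s => (FQ w s)⁻¹) (Ioi 0) :=
  (hw.mul (continuousOn_fQ hw_pos hw hwQ)).inv₀ fun _ ht => (FQ_pos hw_pos hwQ ht).ne'

theorem hasDerivAt_GQ (hw_pos : ∀ t, 0 < t → 0 < w t) (hw : ContinuousOn w (Ioi 0))
    (hwQ : ∀ b, 0 < b → IntegrableOn (fun s => (w s)⁻¹) (Ioo 0 b)) (μ : ℝ) {η t : ℝ}
    (hη : 0 < η) (ht : 0 < t) :
    HasDerivAt (GQ w μ η) (-(FQ w t)⁻¹) t := by
  have hc := continuousOn_inv_FQ hw_pos hw hwQ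
  refine (intervalIntegral.integral_hasDerivAt_left ?_
    (hc.stronglyMeasurableAtFilter isOpen_Ioi t ht)
    (hc.continuousAt (Ioi_mem_nhds ht))).const_add μ
  exact (hc.mono fun x hx => (lt_min ht hη).trans_le hx.1).intervalIntegrable

theorem le_GQ (hw_pos : ∀ t, 0 < t → 0 < w t)
    (hwQ : ∀ b, 0 < b → IntegrableOn (fun s => (w s)⁻¹) (Ioo 0 b)) (μ : ℝ) {η t : ℝ}
    (ht : 0 < t) (htη : t ≤ η) : μ ≤ GQ w μ η t :=
  le_add_of_nonneg_right <| intervalIntegral.integral_nonneg htη fun _ hs =>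
    (inv_pos.2 (FQ_pos hw_pos hwQ (ht.trans_le hs.1))).le

theorem Wp_div_FQ_rpow (hw_pos : ∀ t, 0 < t → 0 < w t)
    (hwQ : ∀ b, 0 < b → IntegrableOn (fun s => (w s)⁻¹) (Ioo 0 b)) (p : ℝ) {t : ℝ}
    (ht : 0 < t) : Wp w p t / FQ w t ^ p = (w t)⁻¹ * fQ w t ^ (-p) := by
  have h1 := hw_pos t ht
  have h2 := fQ_pos hw_pos hwQ ht
  rw [Wp, FQ, Real.mul_rpow h1.le h2.le, Real.rpow_sub_one h1.ne', Real.rpow_neg h2.le]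
  have := Real.rpow_pos_of_pos h1 p
  field_simp

/-- The derivative of the multiplier `f ^ (1 - p) * b (1 - c / G)`. -/
theorem hasDerivAt_multiplier (hw_pos : ∀ t, 0 < t → 0 < w t) (hw : ContinuousOn w (Ioi 0))
    (hwQ : ∀ b, 0 < b → IntegrableOn (fun s => (w s)⁻¹) (Ioo 0 b)) {μ η t : ℝ} (hμ : 0 < μ)
    (ht : 0 < t) (htη : t ≤ η) (p b c : ℝ) :
    HasDerivAt (fun t => fQ w t ^ (1 - p) * (b * (1 - c / GQ w μ η t)))
      (-((w t)⁻¹ * fQ w t ^ (-p)) *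
        ((p - 1) * (b * (1 - c / GQ w μ η t)) + b * c / GQ w μ η t ^ 2)) t := by
  have hf := fQ_pos hw_pos hwQ ht
  have hG : 0 < GQ w μ η t := hμ.trans_le (le_GQ hw_pos hwQ μ ht htη)
  have hwt := hw_pos t ht
  have h1 := (hasDerivAt_fQ hw_pos hw hwQ ht).rpow_const (p := 1 - p) (Or.inl hf.ne')
  have h2 := (((hasDerivAt_const t c).div
    (hasDerivAt_GQ hw_pos hw hwQ μ (ht.trans_le htη) ht) hG.ne').const_sub 1).const_mul b
  refine (h1.mul h2).congr_deriv ?_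
  have e1 : 1 - p - 1 = -p := by ring
  have e2 : fQ w t ^ (1 - p) = fQ w t ^ (-p) * fQ w t := by
    rw [← Real.rpow_add_one hf.ne']; congr 1; ring
  simp only [Pi.div_apply]
  rw [e1, e2, FQ]
  field_simp
  ring

/-- Pointwise form of the Hardy inequality. -/
theorem hardy_pointwise_s5 (hw_pos : ∀ t, 0 < t → 0 < w t)
    (hwQ : ∀ b, 0 < b → IntegrableOn (fun s => (w s)⁻¹) (Ioo 0 b)) {p μ η t c : ℝ}
    (hp : 1 < p) (hμ : 0 < μ) (ht : 0 < t) (htη : t ≤ η) (hc : 0 < c) (hcμ : c < μ)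
    (hcp : p * c ≤ 1 / 2) (x v : ℝ) :
    p * |x| ^ (p - 2) * x * v *
        (fQ w t ^ (1 - p) * ((1 - 1 / p) ^ (p - 1) * (1 - c / GQ w μ η t))) +
      |x| ^ p * (-((w t)⁻¹ * fQ w t ^ (-p)) *
        ((p - 1) * ((1 - 1 / p) ^ (p - 1) * (1 - c / GQ w μ η t)) +
          (1 - 1 / p) ^ (p - 1) * c / GQ w μ η t ^ 2)) ≤
    |v| ^ p * Wp w p t - (1 - 1 / p) ^ p * (|x| ^ p * Wp w p t / FQ w t ^ p) -
      (1 - 1 / p) ^ (p - 1) * c / 2 *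
        (|x| ^ p * Wp w p t / (FQ w t ^ p * GQ w μ η t ^ 2)) := by
  have hf := fQ_pos hw_pos hwQ ht
  have hGμ := le_GQ hw_pos hwQ μ ht htη
  have hG : 0 < GQ w μ η t := hμ.trans_le hGμ
  have hwt := hw_pos t ht
  have hk : 0 < 1 - 1 / p := by
    rw [one_sub_div (by linarith)]; exact div_pos (by linarith) (by linarith)
  have hb : 0 < (1 - 1 / p) ^ (p - 1) := Real.rpow_pos_of_pos hk _
  have hs0 : 0 ≤ c / GQ w μ η t := by positivity
  have hs1 : c / GQ w μ η t < 1 := by rw [div_lt_one hG]; linarith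
  have hY := weighted_young (x := x) (v := v) hp hwt hf
    (mul_nonneg hb.le (sub_nonneg.2 hs1.le))
  have hR := riccati_lower_bound hp hs0 hs1
  have hm : 0 ≤ |x| ^ p * ((w t)⁻¹ * fQ w t ^ (-p)) := by positivity
  have hW := Wp_div_FQ_rpow hw_pos hwQ p ht
  rw [← div_div, mul_div_assoc (|x| ^ p) (Wp w p t), hW]
  have hsq : p * (1 - 1 / p) ^ (p - 1) * (c / GQ w μ η t) ^ 2 ≤
      (1 - 1 / p) ^ (p - 1) * c / 2 / GQ w μ η t ^ 2 := by
    rw [div_pow, mul_div_assoc']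
    gcongr
    nlinarith [mul_pos hb hc]
  have hkey : (1 - 1 / p) ^ p + (1 - 1 / p) ^ (p - 1) * c / 2 / GQ w μ η t ^ 2 ≤
      (p - 1) * ((1 - 1 / p) ^ (p - 1) * (1 - c / GQ w μ η t)
        - ((1 - 1 / p) ^ (p - 1) * (1 - c / GQ w μ η t)) ^ (p / (p - 1))) +
      (1 - 1 / p) ^ (p - 1) * c / GQ w μ η t ^ 2 := by
    have : (1 - 1 / p) ^ (p - 1) * c / GQ w μ η t ^ 2 =
      2 * ((1 - 1 / p) ^ (p - 1) * c / 2 / GQ w μ η t ^ 2) := by ring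
    linarith
  have hfin := mul_le_mul_of_nonneg_left hkey hm
  have hWp : Wp w p t = w t ^ (p - 1) := rfl
  rw [hWp]
  have e : (1 - 1 / p) ^ (p - 1) * c / 2 *
        (|x| ^ p * ((w t)⁻¹ * fQ w t ^ (-p)) / GQ w μ η t ^ 2) =
      |x| ^ p * ((w t)⁻¹ * fQ w t ^ (-p)) *
        ((1 - 1 / p) ^ (p - 1) * c / 2 / GQ w μ η t ^ 2) := by ring
  rw [e]
  linarith

end Weight

/-- If `h` vanishes on `(0, a)`, its integral over `(0, η)` starts at `a`. -/
theorem intervalIntegral_eq_of_vanish {h : ℝ → ℝ} {a η : ℝ} (ha : 0 < a)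
    (haη : a ≤ η) (hz : ∀ t ∈ Ioc 0 a, h t = 0) (hc : ContinuousOn h (Icc a η)) :
    ∫ t in (0:ℝ)..η, h t = ∫ t in a..η, h t := by
  have hz' : EqOn h (fun _ => 0) (uIoc 0 a) := by
    rw [uIoc_of_le ha.le]; exact hz
  have hi : IntervalIntegrable h volume 0 a :=
    (intervalIntegrable_congr hz').2 intervalIntegrable_const
  rw [← intervalIntegral.integral_add_adjacent_intervals hi (hc.intervalIntegrable_of_Icc haη),
    intervalIntegral.integral_congr_ae (.of_forall hz')]
  simp

/-- Weighted Hardy inequality with sharp remainder for `w ∈ Q(ℝ₊)`: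
there are positive constants `C, L` (independent of `u`) such that the Hardy
inequality holds with the extra remainder term `C ∫ |u|^p W_p/(F_η^p G_η^2)`
and the boundary term `+ L |u(η)|^p`. -/
theorem hardy_Q_remainder (p μ η : ℝ) (hp : 1 < p) (hμ : 0 < μ) (hη : 0 < η)
    (w : ℝ → ℝ)
    (hw_pos : ∀ t, 0 < t → 0 < w t)
    (hw_smooth : ContDiffOn ℝ 1 w (Set.Ioi 0))
    (hw_lim : ∃ a : ENNReal, Filter.Tendsto (fun t => ENNReal.ofReal (w t))
        (nhdsWithin (0:ℝ) (Set.Ioi 0)) (nhds a))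
    (hwQ : ∀ b, 0 < b → MeasureTheory.IntegrableOn (fun s => (w s)⁻¹) (Set.Ioo 0 b)) :
    ∃ C L : ℝ, 0 < C ∧ 0 < L ∧
      ∀ u u' : ℝ → ℝ,
        (∀ t ∈ Set.Ioc (0:ℝ) η, HasDerivWithinAt u (u' t) (Set.Ioc (0:ℝ) η) t) →
        ContinuousOn u' (Set.Ioc (0:ℝ) η) →
        (∃ a, 0 < a ∧ ∀ t ≤ a, u t = 0) →
        (∫ t in (0:ℝ)..η, |u' t| ^ p * Wp w p t)
        ≥ (1 - 1 / p) ^ p *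
            (∫ t in (0:ℝ)..η, |u t| ^ p * Wp w p t / FQ w t ^ p)
          + C * (∫ t in (0:ℝ)..η, |u t| ^ p * Wp w p t / (FQ w t ^ p * GQ w μ η t ^ 2))
          + L * |u η| ^ p := by
  have hw : ContinuousOn w (Ioi 0) := hw_smooth.continuousOn
  have hp0 : 0 < p := by linarith
  have hk : 0 < 1 - 1 / p := by
    rw [one_sub_div hp0.ne']; exact div_pos (by linarith) hp0
  have hb : 0 < (1 - 1 / p) ^ (p - 1) := Real.rpow_pos_of_pos hk _
  obtain ⟨c, hc, hcμ, hcp⟩ : ∃ c, 0 < c ∧ c < μ ∧ p * c ≤ 1 / 2 := by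
    refine ⟨min (μ / 2) (1 / (2 * p)), by positivity, (min_le_left _ _).trans_lt (by linarith), ?_⟩
    calc p * min (μ / 2) (1 / (2 * p)) ≤ p * (1 / (2 * p)) := by gcongr; exact min_le_right _ _
      _ = 1 / 2 := by field_simp
  have hGη : GQ w μ η η = μ := by simp [GQ]
  refine ⟨(1 - 1 / p) ^ (p - 1) * c / 2,
    fQ w η ^ (1 - p) * ((1 - 1 / p) ^ (p - 1) * (1 - c / GQ w μ η η)), by positivity, ?_, ?_⟩
  · have : 0 < 1 - c / GQ w μ η η := by rw [hGη, sub_pos, div_lt_one hμ]; exact hcμ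
    exact mul_pos (Real.rpow_pos_of_pos (fQ_pos hw_pos hwQ hη) _) (mul_pos hb this)
  rintro u u' hu hu' ⟨a₀, ha₀, hua₀⟩
  obtain ⟨a, ha, haη, haa⟩ : ∃ a, 0 < a ∧ a < η ∧ a < a₀ :=
    ⟨min a₀ η / 2, by positivity, by linarith [min_le_right a₀ η, lt_min ha₀ hη],
      by linarith [min_le_left a₀ η, lt_min ha₀ hη]⟩
  have hu0 : ∀ t ∈ Ioc 0 a, u t = 0 := fun t ht => hua₀ t (ht.2.trans haa.le)
  have hder : ∀ t ∈ Ioo 0 η, HasDerivAt u (u' t) t := fun t ht =>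
    (hu t ⟨ht.1, ht.2.le⟩).hasDerivAt (Ioc_mem_nhds ht.1 ht.2)
  have hu'0 : ∀ t ∈ Ioc 0 a, u' t = 0 := fun t ht =>
    (hder t ⟨ht.1, ht.2.trans_lt haη⟩).unique <|
      (hasDerivAt_const t (0 : ℝ)).congr_of_eventuallyEq <|
        Filter.eventuallyEq_of_mem (Iio_mem_nhds (ht.2.trans_lt haa)) fun s hs => hua₀ s hs.le
  have hpos : ∀ t ∈ Icc a η, 0 < t := fun t ht => ha.trans_le ht.1
  have hsub : Icc a η ⊆ Ioc 0 η := fun t ht => ⟨hpos t ht, ht.2⟩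
  have cu : ContinuousOn u (Icc a η) := fun t ht =>
    ((hu t (hsub ht)).mono hsub).continuousWithinAt
  have cup : ContinuousOn (fun t => |u t| ^ p) (Icc a η) :=
    cu.abs.rpow_const fun _ _ => Or.inr hp0.le
  have cu'p : ContinuousOn (fun t => |u' t| ^ p) (Icc a η) :=
    (hu'.mono hsub).abs.rpow_const fun _ _ => Or.inr hp0.le
  have cw : ContinuousOn w (Icc a η) := hw.mono hpos
  have cf : ContinuousOn (fQ w) (Icc a η) := (continuousOn_fQ hw_pos hw hwQ).mono hpos
  have cW : ContinuousOn (Wp w p) (Icc a η) :=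
    cw.rpow_const fun t ht => Or.inl (hw_pos t (hpos t ht)).ne'
  have cF : ContinuousOn (fun t => FQ w t ^ p) (Icc a η) :=
    (cw.mul cf).rpow_const fun _ _ => Or.inr hp0.le
  have cG : ContinuousOn (GQ w μ η) (Icc a η) := fun t ht =>
    (hasDerivAt_GQ hw_pos hw hwQ μ hη (hpos t ht)).continuousAt.continuousWithinAt
  have hFne : ∀ t ∈ Icc a η, FQ w t ^ p ≠ 0 := fun t ht =>
    (Real.rpow_pos_of_pos (FQ_pos hw_pos hwQ (hpos t ht)) p).ne'
  have hGne : ∀ t ∈ Icc a η, GQ w μ η t ≠ 0 := fun t ht =>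
    (hμ.trans_le (le_GQ hw_pos hwQ μ (hpos t ht) ht.2)).ne'
  have c1 : ContinuousOn (fun t => |u' t| ^ p * Wp w p t) (Icc a η) := cu'p.mul cW
  have c2 : ContinuousOn (fun t => |u t| ^ p * Wp w p t / FQ w t ^ p) (Icc a η) :=
    (cup.mul cW).div cF hFne
  have c3 : ContinuousOn (fun t => |u t| ^ p * Wp w p t / (FQ w t ^ p * GQ w μ η t ^ 2))
      (Icc a η) :=
    (cup.mul cW).div (cF.mul (cG.pow 2)) fun t ht =>
      mul_ne_zero (hFne t ht) (pow_ne_zero 2 (hGne t ht))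
  rw [intervalIntegral_eq_of_vanish ha haη.le
      (fun t ht => by simp [hu'0 t ht, Real.zero_rpow hp0.ne']) c1,
    intervalIntegral_eq_of_vanish ha haη.le
      (fun t ht => by simp [hu0 t ht, Real.zero_rpow hp0.ne']) c2,
    intervalIntegral_eq_of_vanish ha haη.le
      (fun t ht => by simp [hu0 t ht, Real.zero_rpow hp0.ne']) c3]
  have hmain := intervalIntegral.sub_le_integral_of_hasDeriv_right_of_le haη.le
    (g := fun t => |u t| ^ p *
      (fQ w t ^ (1 - p) * ((1 - 1 / p) ^ (p - 1) * (1 - c / GQ w μ η t))))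
    (φ := fun t => |u' t| ^ p * Wp w p t - (1 - 1 / p) ^ p * (|u t| ^ p * Wp w p t / FQ w t ^ p) -
      (1 - 1 / p) ^ (p - 1) * c / 2 * (|u t| ^ p * Wp w p t / (FQ w t ^ p * GQ w μ η t ^ 2)))
    (cup.mul fun t ht => (hasDerivAt_multiplier hw_pos hw hwQ hμ (hpos t ht) ht.2 p _
      c).continuousAt.continuousWithinAt)
    (fun t ht => (((hasDerivAt_abs_rpow (u t) hp).comp t (hder t ⟨ha.trans ht.1, ht.2⟩)).mul
      (hasDerivAt_multiplier hw_pos hw hwQ hμ (ha.trans ht.1) ht.2.le p _ c)).hasDerivWithinAt)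
    ((c1.sub (c2.const_mul _)).sub (c3.const_mul _)).integrableOn_Icc
    (fun t ht => hardy_pointwise_s5 hw_pos hwQ hp hμ (ha.trans ht.1) ht.2.le hc hcμ hcp (u t) (u' t))
  have i1 := c1.intervalIntegrable_of_Icc (μ := volume) haη.le
  have i2 := (c2.intervalIntegrable_of_Icc (μ := volume) haη.le).const_mul ((1 - 1 / p) ^ p)
  have i3 := (c3.intervalIntegrable_of_Icc (μ := volume) haη.le).const_mul
    ((1 - 1 / p) ^ (p - 1) * c / 2)
  rw [intervalIntegral.integral_sub (i1.sub i2) i3, intervalIntegral.integral_sub i1 i2,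
    intervalIntegral.integral_const_mul, intervalIntegral.integral_const_mul,
    hu0 a ⟨ha, le_rfl⟩, abs_zero, Real.zero_rpow hp0.ne'] at hmain
  linarith
end

section
/- Let p ≥ 2. Then there exists a positive number c(p), depending only on p, such that for every q ∈ [2,p] and every real number X one has |1+X|^p − 1 − pX ≥ c(p) |X|^q. -/
/-- The quadratic lower bound, from Bernoulli's inequality for `|1 + X| ^ p = ((1 + X) ^ 2) ^ (p / 2)`. -/
theorem sq_le_abs_one_add_rpow_sub {p : ℝ} (hp : 2 ≤ p) (X : ℝ) :
    X ^ 2 ≤ |1 + X| ^ p - 1 - p * X := by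
  have hB := one_add_mul_self_le_rpow_one_add (s := 2 * X + X ^ 2)
    (by nlinarith [sq_nonneg (1 + X)]) (p := p / 2) (by linarith)
  have hrpow : (1 + (2 * X + X ^ 2)) ^ (p / 2) = |1 + X| ^ p := by
    rw [show 1 + (2 * X + X ^ 2) = |1 + X| ^ (2 : ℝ) by rw [Real.rpow_two, sq_abs]; ring,
      ← Real.rpow_mul (abs_nonneg _)]
    congr 1
    ring
  rw [hrpow] at hB
  nlinarith [mul_nonneg (sub_nonneg.2 hp) (sq_nonneg X)]

theorem abs_rpow_le_two_rpow_mul {p : ℝ} (hp : 0 ≤ p) (X : ℝ) :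
    |X| ^ p ≤ 2 ^ p * (|1 + X| ^ p + 1) := by
  have hX : |X| ≤ 2 * max |1 + X| 1 := by
    have h : |X| ≤ |1 + X| + 1 := by simpa using abs_sub (1 + X) 1
    linarith [le_max_left |1 + X| 1, le_max_right |1 + X| 1]
  calc |X| ^ p ≤ (2 * max |1 + X| 1) ^ p := Real.rpow_le_rpow (abs_nonneg X) hX hp
    _ = 2 ^ p * max |1 + X| 1 ^ p := Real.mul_rpow (by norm_num) (by positivity)
    _ ≤ 2 ^ p * (|1 + X| ^ p + 1) := by
      gcongr
      rcases max_choice |1 + X| 1 with h | h <;> rw [h]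
      · linarith
      · rw [Real.one_rpow]
        linarith [Real.rpow_nonneg (abs_nonneg (1 + X)) p]

/-- For `p ≥ 2` there is a constant `c(p) > 0`, independent of
`q ∈ [2,p]` and of `X ∈ ℝ`, such that `|1+X|^p − 1 − pX ≥ c(p) |X|^q`. -/
theorem elementary_ineq_p_ge_two (p : ℝ) (hp : 2 ≤ p) :
    ∃ c : ℝ, 0 < c ∧ ∀ q ∈ Set.Icc (2:ℝ) p, ∀ X : ℝ,
      |1 + X| ^ p - 1 - p * X ≥ c * |X| ^ q := by
  have hK : 0 < 2 ^ p * (3 + p) := by positivity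
  refine ⟨(2 ^ p * (3 + p))⁻¹, inv_pos.2 hK, ?_⟩
  rintro q ⟨hq, hqp⟩ X
  have hF := sq_le_abs_one_add_rpow_sub hp X
  rw [ge_iff_le, inv_mul_le_iff₀ hK]
  rcases le_total |X| 1 with hX | hX
  · have hle : |X| ^ q ≤ X ^ 2 := by
      rw [← sq_abs X, ← Real.rpow_two]
      exact Real.rpow_le_rpow_of_exponent_ge_of_imp (abs_nonneg X) hX hq (by intros; linarith)
    have hK1 : 1 ≤ 2 ^ p * (3 + p) :=
      one_le_mul_of_one_le_of_one_le (Real.one_le_rpow (by norm_num) (by linarith)) (by linarith)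
    exact (hle.trans hF).trans (le_mul_of_one_le_left ((sq_nonneg X).trans hF) hK1)
  · have hsq : 1 ≤ X ^ 2 := by rw [← sq_abs]; exact one_le_pow₀ hX
    have hXsq : X ≤ X ^ 2 := by rw [← sq_abs]; nlinarith [le_abs_self X]
    calc |X| ^ q ≤ |X| ^ p := Real.rpow_le_rpow_of_exponent_le hX hqp
      _ ≤ 2 ^ p * (|1 + X| ^ p + 1) := abs_rpow_le_two_rpow_mul (by linarith) X
      _ ≤ 2 ^ p * ((3 + p) * (|1 + X| ^ p - 1 - p * X)) := by
        gcongr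
        nlinarith
      _ = 2 ^ p * (3 + p) * (|1 + X| ^ p - 1 - p * X) := by ring
end

section
/- Let 1 < p ≤ 2. Then there exists a positive number c(p), depending only on p, such that for every M ≥ 1 and every real number X: if |X| ≤ M then |1+X|^p − 1 − pX ≥ c(p) M^{p-2} X², and if |X| ≥ M then |1+X|^p − 1 − pX ≥ c(p) |X|^p. -/
/-- The tangent line of `y ↦ y ^ p` at `m > 0` lies below the graph on `[0, ∞)`. -/
lemma rpow_tangent_le {p m y : ℝ} (hp : 1 ≤ p) (hm : 0 < m) (hy : 0 ≤ y) :
    m ^ p + p * m ^ (p - 1) * (y - m) ≤ y ^ p := by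
  have bernoulli : 1 + p * (y / m - 1) ≤ (1 + (y / m - 1)) ^ p :=
    one_add_mul_self_le_rpow_one_add (by linarith [div_nonneg hy hm.le]) hp
  rw [add_sub_cancel, Real.div_rpow hy hm.le, le_div_iff₀ (Real.rpow_pos_of_pos hm p)] at bernoulli
  have hmp : m ^ p = m ^ (p - 1) * m := by
    rw [← Real.rpow_add_one hm.ne', sub_add_cancel]
  calc m ^ p + p * m ^ (p - 1) * (y - m) = (1 + p * (y / m - 1)) * m ^ p := by
        rw [hmp]; field_simp
    _ ≤ y ^ p := bernoulli

lemma one_add_mul_le_rpow_one_add_half {q x : ℝ} (hq0 : 0 ≤ q) (hq1 : q ≤ 1)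
    (hx0 : 0 ≤ x) (hx1 : x ≤ 1) : 1 + q * x / 3 ≤ (1 + x / 2) ^ q := by
  have hm : 0 < 1 + x / 2 := by linarith
  have hinv : 0 < (1 + x / 2)⁻¹ := inv_pos.mpr hm
  have bernoulli : (1 + ((1 + x / 2)⁻¹ - 1)) ^ q ≤ 1 + q * ((1 + x / 2)⁻¹ - 1) :=
    rpow_one_add_le_one_add_mul_self (by linarith) hq0 hq1
  have hle : (1 + x / 2)⁻¹ ≤ 1 - x / 3 := by
    rw [inv_le_iff_one_le_mul₀ hm]; nlinarith
  have hone : 1 ≤ (1 + x / 2) ^ q := Real.one_le_rpow (by linarith) hq0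
  rw [add_sub_cancel, Real.inv_rpow hm.le] at bernoulli
  have hupper : ((1 + x / 2) ^ q)⁻¹ ≤ 1 - q * x / 3 := by nlinarith
  rw [inv_le_iff_one_le_mul₀ (by linarith)] at hupper
  nlinarith [mul_nonneg hq0 hx0]

lemma rpow_one_add_sub_ge_sq {p x : ℝ} (hp1 : 1 ≤ p) (hp2 : p ≤ 2) (hx : |x| ≤ 1) :
    p * (p - 1) / 6 * x ^ 2 ≤ |1 + x| ^ p - 1 - p * x := by
  obtain ⟨hx1, hx2⟩ := abs_le.mp hx
  rw [abs_of_nonneg (by linarith)]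
  have tangent := rpow_tangent_le (m := 1 + x / 2) (y := 1 + x) hp1 (by linarith) (by linarith)
  have bernoulli : 1 + p * (x / 2) ≤ (1 + x / 2) ^ p :=
    one_add_mul_self_le_rpow_one_add (by linarith) hp1
  have slope : (p - 1) * x / 3 * x ≤ ((1 + x / 2) ^ (p - 1) - 1) * x := by
    rcases le_total 0 x with h | h
    · have := one_add_mul_le_rpow_one_add_half (q := p - 1) (by linarith) (by linarith) h hx2
      exact mul_le_mul_of_nonneg_right (by linarith) h
    · have : (1 + x / 2) ^ (p - 1) ≤ 1 + (p - 1) * (x / 2) :=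
        rpow_one_add_le_one_add_mul_self (by linarith) (by linarith) (by linarith)
      exact mul_le_mul_of_nonpos_right (by nlinarith) h
  have := mul_le_mul_of_nonneg_left slope (by linarith : 0 ≤ p / 2)
  linarith

lemma rpow_one_add_sub_ge_rpow_of_one_le {p x : ℝ} (hp : 1 ≤ p) (hx : 1 ≤ x) :
    (1 - (p + 1) / 2 ^ p) * (1 + x) ^ p ≤ (1 + x) ^ p - 1 - p * x := by
  have h2 : (0 : ℝ) < 2 ^ p := by positivity
  have bernoulli : 1 + p * ((x - 1) / 2) ≤ (1 + (x - 1) / 2) ^ p :=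
    one_add_mul_self_le_rpow_one_add (by linarith) hp
  rw [show 1 + (x - 1) / 2 = (1 + x) / 2 by ring,
    Real.div_rpow (by linarith) (by norm_num)] at bernoulli
  have key : 1 + p * x ≤ (p + 1) * ((1 + x) ^ p / 2 ^ p) := by
    nlinarith [mul_le_mul_of_nonneg_left bernoulli (by linarith : 0 ≤ p + 1),
      mul_nonneg (mul_nonneg (by linarith : 0 ≤ p) (by linarith : 0 ≤ p - 1))
        (by linarith : 0 ≤ x - 1)]
  have : (p + 1) / 2 ^ p * (1 + x) ^ p = (p + 1) * ((1 + x) ^ p / 2 ^ p) := by ring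
  linarith

lemma rpow_sub_one_add_ge_rpow {p y : ℝ} (hp1 : 1 ≤ p) (hp2 : p ≤ 2) (hy : 1 ≤ y) :
    (p - 1) / 2 * y ^ p ≤ (y - 1) ^ p - 1 + p * y := by
  have hz : 0 ≤ (y - 1) ^ p := Real.rpow_nonneg (by linarith) p
  have convex : y ^ p ≤ 2 ^ (p - 1) * ((y - 1) ^ p + 1) := by
    lift y - 1 to NNReal using (by linarith) with z hyz
    have h := NNReal.rpow_add_le_mul_rpow_add_rpow z 1 hp1
    rw [← NNReal.coe_le_coe] at h
    push_cast at h
    rwa [hyz, sub_add_cancel, Real.one_rpow, ← hyz] at h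
  have htwo : (2 : ℝ) ^ (p - 1) ≤ 2 := by
    simpa using Real.rpow_le_rpow_of_exponent_le (x := 2) (by norm_num)
      (by linarith : p - 1 ≤ 1)
  have : y ^ p ≤ 2 * ((y - 1) ^ p + 1) := convex.trans (by gcongr)
  nlinarith [mul_le_mul_of_nonneg_left this (by linarith : 0 ≤ (p - 1) / 2)]

/-- For `1 < p ≤ 2` there is a constant `c(p) > 0`, independent of
`M ≥ 1` and of `X ∈ ℝ`, such that `|1+X|^p − 1 − pX ≥ c(p) M^(p-2) X²` whenever
`|X| ≤ M`, and `|1+X|^p − 1 − pX ≥ c(p) |X|^p` whenever `|X| ≥ M`. -/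
theorem elementary_ineq_p_le_two (p : ℝ) (hp1 : 1 < p) (hp2 : p ≤ 2) :
    ∃ c : ℝ, 0 < c ∧ ∀ M : ℝ, 1 ≤ M → ∀ X : ℝ,
      (|X| ≤ M → |1 + X| ^ p - 1 - p * X ≥ c * M ^ (p - 2) * X ^ 2) ∧
      (M ≤ |X| → |1 + X| ^ p - 1 - p * X ≥ c * |X| ^ p) := by
  have hpos : 0 < 1 - (p + 1) / 2 ^ p := by
    have : 1 + p * 1 < (1 + 1 : ℝ) ^ p :=
      one_add_mul_self_lt_rpow_one_add (by norm_num) (by norm_num) hp1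
    rw [sub_pos, div_lt_one (by positivity)]
    norm_num at this
    linarith
  obtain ⟨c, hc, hc1, hc2, hc3⟩ : ∃ c : ℝ, 0 < c ∧ c ≤ p * (p - 1) / 6 ∧
      c ≤ 1 - (p + 1) / 2 ^ p ∧ c ≤ (p - 1) / 2 := by
    refine ⟨min (p * (p - 1) / 6) (min (1 - (p + 1) / 2 ^ p) ((p - 1) / 2)), ?_,
      min_le_left _ _, (min_le_right _ _).trans (min_le_left _ _),
      (min_le_right _ _).trans (min_le_right _ _)⟩
    have : 0 < p - 1 := by linarith
    exact lt_min (by positivity) (lt_min hpos (by positivity))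
  have large : ∀ X : ℝ, 1 ≤ |X| → c * |X| ^ p ≤ |1 + X| ^ p - 1 - p * X := by
    intro X hX
    rcases le_total 0 X with h | h
    · rw [abs_of_nonneg h] at hX ⊢
      rw [abs_of_nonneg (by linarith : 0 ≤ 1 + X)]
      refine le_trans ?_ (rpow_one_add_sub_ge_rpow_of_one_le hp1.le hX)
      gcongr
      linarith
    · rw [abs_of_nonpos h] at hX ⊢
      rw [abs_of_nonpos (by linarith : 1 + X ≤ 0)]
      have bound := rpow_sub_one_add_ge_rpow hp1.le hp2 hX
      rw [show -X - 1 = -(1 + X) by ring] at bound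
      have : c * (-X) ^ p ≤ (p - 1) / 2 * (-X) ^ p := by gcongr
      linarith
  refine ⟨c, hc, fun M hM X => ⟨fun hXM => ?_, fun hMX => large X (hM.trans hMX)⟩⟩
  rcases le_total |X| 1 with h | h
  · refine le_trans ?_ (rpow_one_add_sub_ge_sq hp1.le hp2 h)
    have : M ^ (p - 2) ≤ 1 := Real.rpow_le_one_of_one_le_of_nonpos hM (by linarith)
    gcongr
    nlinarith
  · refine le_trans ?_ (large X h)
    have hX : 0 < |X| := by linarith
    have hmono : M ^ (p - 2) ≤ |X| ^ (p - 2) :=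
      Real.rpow_le_rpow_of_nonpos hX hXM (by linarith)
    have hsplit : |X| ^ p = |X| ^ (p - 2) * X ^ 2 := by
      rw [← sq_abs X, ← Real.rpow_natCast, ← Real.rpow_add hX]
      norm_num
    rw [hsplit, mul_assoc]
    gcongr
end
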